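/- Let μ and ν be compactly supported probability measures on ℝ with μ nondegenerate, and let ρ be a free additive convolution of μ and ν. For a real number z, the function E_{μ,ν,z} has a critical point (a point where its derivative vanishes) in Ê_{μ,ν,z} ∩ (−∞, g*_ρ) if and only if z < z*_ρ. Moreover, if z < z*_ρ, then g = G_ρ(z) is the unique critical point of E_{μ,ν,z} in Ê_{μ,ν,z} ∩ (−∞, g*_ρ), and it is a nondegenerate local minimum: E_{μ,ν,z}′(G_ρ(z)) = 0 and E_{μ,ν,z}″(G_ρ(z)) > 0. -/

import Mathlib

/-!
Put `K_τ = G_τ^⟨-1⟩`, so `R_τ(-g) = K_τ(g) + 1/g`. Differentiating `E` gives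
`E'(g) = R_μ'(-g) · (g - G_ν(z - R_μ(-g)))`, and `R_μ' > 0` because `μ` is not a point mass (strict
Cauchy–Schwarz: `G_μ² < G_μ'`). Hence `g` is critical iff `K_ν(g) = z - R_μ(-g)`, that is,
`z = K_μ(g) + K_ν(g) + 1/g`. The right-hand side equals `K_ρ(g)` near `0` by hypothesis, and for
all `g` in the common part of the three domains by analytic continuation (`Ginv_add`), so the
condition becomes `z = K_ρ(g)`, i.e. `g = G_ρ(z)`. At such a point
`E'' = R_μ' · G_ν' · (1/G_ν' - R_μ')`, and differentiating the identity for `K_ρ` turns the last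
factor into `1/G_ρ'(z) > 0`.

It remains to see that `G_ρ(z)` lies in the domains of `R_μ` and `K_ν` for every `z < a_ρ`, i.e. that
`g*_ρ ≤ min (G_μ(a_μ)) (G_ν(a_ν))` (`GaSup_le`). This is where the subordination function
`ω = K_μ ∘ G_ρ` enters. Only the real line is used: Nevanlinna functions are replaced by absolutely
monotone ones (all derivatives nonnegative on a half-line). By Kaluza's theorem on reciprocals of
power series with log-convex coefficients, `-1/G_ν(w) - w` has an absolutely monotone derivative,
and therefore `ω' - 1` is absolutely monotone. The derivatives of `G_ρ = G_μ ∘ ω` at `x`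
then dominate those of `G_μ` at `ω(x)`, and comparing their growth gives
`a_ρ - x ≤ a_μ - ω(x)`. If `G_ρ` reached the finite value `G_μ(a_μ)` at an interior point `x₀ < a_ρ`,
letting `x ↑ x₀` would force `ω(x) → a_μ`, a contradiction.
-/

open MeasureTheory Filter Set

noncomputable section

/-- The topological support of a Borel measure on `ℝ`. -/
def msupp (μ : Measure ℝ) : Set ℝ := {x : ℝ | ∀ U ∈ nhds x, μ U ≠ 0}

/-- Compact support: some compact set has full measure. -/
def HasCompactSupp (μ : Measure ℝ) : Prop := ∃ K : Set ℝ, IsCompact K ∧ μ K = 1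

/-- `a_μ`, the infimum of the support. -/
def aInf (μ : Measure ℝ) : ℝ := sInf (msupp μ)

/-- `b_μ`, the supremum of the support. -/
def bSup (μ : Measure ℝ) : ℝ := sSup (msupp μ)

/-- The (real) Stieltjes transform `G_μ(z) = ∫ (λ - z)⁻¹ dμ(λ)`. -/
def Gst (μ : Measure ℝ) (z : ℝ) : ℝ := ∫ l, (l - z)⁻¹ ∂μ

/-- `G_μ(a_μ) = lim_{z ↑ a_μ} G_μ(z) ∈ (0,∞]`, as the supremum (in `EReal`) of the values of
`G_μ` on `(-∞, a_μ)` (the two agree since `G_μ` is increasing there). -/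
def GaSup (μ : Measure ℝ) : EReal :=
  sSup ((fun z => ((Gst μ z : ℝ) : EReal)) '' Set.Iio (aInf μ))

/-- `G_μ(b_μ) = lim_{z ↓ b_μ} G_μ(z) ∈ [-∞,0)`, as the infimum (in `EReal`) of the values of
`G_μ` on `(b_μ, ∞)` (the two agree since `G_μ` is increasing there). -/
def GbInf (μ : Measure ℝ) : EReal :=
  sInf ((fun z => ((Gst μ z : ℝ) : EReal)) '' Set.Ioi (bSup μ))

/-- The interval `D̂_μ = (-G_μ(a_μ), -G_μ(b_μ)) ⊆ ℝ`. -/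
def Dhat (μ : Measure ℝ) : Set ℝ :=
  {u : ℝ | -(GaSup μ) < (u : EReal) ∧ (u : EReal) < -(GbInf μ)}

/-- The inverse `G_μ^⟨-1⟩` of the restriction of `G_μ` to `ℝ ∖ [a_μ, b_μ]`. -/
def Ginv (μ : Measure ℝ) (g : ℝ) : ℝ :=
  Function.invFunOn (Gst μ) (Set.Iio (aInf μ) ∪ Set.Ioi (bSup μ)) g

/-- The real `R`-transform `R̂_μ(u) = G_μ^⟨-1⟩(-u) - u⁻¹`, meaningful for `u ∈ D̂_μ ∖ {0}`. -/
def Rhat (μ : Measure ℝ) (u : ℝ) : ℝ := Ginv μ (-u) - u⁻¹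

/-- `ρ` is a free additive convolution of `μ` and `ν`. -/
def IsFreeAdd (μ ν ρ : Measure ℝ) : Prop :=
  IsProbabilityMeasure ρ ∧ HasCompactSupp ρ ∧
  ∃ ε > (0 : ℝ), ∀ u : ℝ, u ∈ Set.Ioo (-ε) ε → u ≠ 0 →
    u ∈ Dhat ρ ∧ u ∈ Dhat μ ∧ u ∈ Dhat ν ∧ Rhat ρ u = Rhat μ u + Rhat ν u

/-- `μ` is nondegenerate: not a point mass. -/
def Nondeg (μ : Measure ℝ) : Prop := ¬ ∃ c : ℝ, μ = Measure.dirac c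

/-- The logarithmic potential `U_ρ(z) = ∫ log |z - λ| dρ(λ)`. -/
def Upot (ρ : Measure ℝ) (z : ℝ) : ℝ := ∫ l, Real.log |z - l| ∂ρ

/-- `E_{μ,ν,z}(g) = ∫₀^g s R̂_μ'(-s) ds + ∫ log (λ - z + R̂_μ(-g)) dν(λ)`. -/
def Efun (μ ν : Measure ℝ) (z : ℝ) (g : ℝ) : ℝ :=
  (∫ s in (0:ℝ)..g, s * deriv (Rhat μ) (-s)) + ∫ l, Real.log (l - z + Rhat μ (-g)) ∂ν

/-- The domain `Ê_{μ,ν,z}` of `E_{μ,ν,z}`. -/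
def Ehat (μ ν : Measure ℝ) (z : ℝ) : Set ℝ :=
  {g : ℝ | -g ∈ Dhat μ ∧ g ≠ 0 ∧ z - Rhat μ (-g) < aInf ν}

/-- `F̂_{μ,ν}(h) = R̂_μ(-G_ν(h)) + h`. -/
def Fhat (μ ν : Measure ℝ) (h : ℝ) : ℝ := Rhat μ (-(Gst ν h)) + h

/-- The domain of `F̂_{μ,ν}`. -/
def FhatDom (μ ν : Measure ℝ) : Set ℝ := {h : ℝ | h < aInf ν ∧ -(Gst ν h) ∈ Dhat μ}

/-- `Ĥ_{μ,ν}`: points of the domain to the left of which `F̂_{μ,ν}'` is positive. -/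
def Hhat (μ ν : Measure ℝ) : Set ℝ :=
  {h : ℝ | h ∈ FhatDom μ ν ∧ ∀ t ∈ FhatDom μ ν, t < h → 0 < deriv (Fhat μ ν) t}

/-- `h*_{μ,ν} = sup Ĥ_{μ,ν}`. -/
def hstar (μ ν : Measure ℝ) : ℝ := sSup (Hhat μ ν)

end

/-! ### Support, moments of the resolvent, and analyticity -/

section Basic

variable {μ : Measure ℝ} [IsProbabilityMeasure μ]

lemma msupp_eq_support (μ : Measure ℝ) : msupp μ = μ.support := by
  ext x
  simp [msupp, Measure.mem_support_iff_forall, pos_iff_ne_zero]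

lemma msupp_nonempty (μ : Measure ℝ) [IsProbabilityMeasure μ] : (msupp μ).Nonempty := by
  rw [msupp_eq_support]
  exact Measure.nonempty_support (IsProbabilityMeasure.ne_zero μ)

lemma msupp_subset (hc : HasCompactSupp μ) : ∃ K, IsCompact K ∧ msupp μ ⊆ K := by
  obtain ⟨K, hK, h1⟩ := hc
  refine ⟨K, hK, ?_⟩
  rw [msupp_eq_support]
  refine Measure.support_subset_of_isClosed hK.isClosed ?_
  rw [mem_ae_iff]
  exact (prob_compl_eq_zero_iff hK.measurableSet).2 h1

lemma ae_mem_Icc (hc : HasCompactSupp μ) : ∀ᵐ l ∂μ, l ∈ Icc (aInf μ) (bSup μ) := by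
  obtain ⟨K, hK, h1⟩ := msupp_subset hc
  have h2 : ∀ᵐ l ∂μ, l ∈ msupp μ := by
    rw [msupp_eq_support]
    exact Measure.support_mem_ae
  filter_upwards [h2] with l hl
  exact ⟨csInf_le (hK.bddBelow.mono h1) hl, le_csSup (hK.bddAbove.mono h1) hl⟩

lemma aInf_le_bSup (hc : HasCompactSupp μ) : aInf μ ≤ bSup μ := by
  obtain ⟨l, hl⟩ := (ae_mem_Icc hc).exists
  exact hl.1.trans hl.2

lemma measure_Iio_ne_zero {c : ℝ} (h : aInf μ < c) : μ (Iio c) ≠ 0 := by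
  obtain ⟨x, hx, hxc⟩ := exists_lt_of_csInf_lt (msupp_nonempty μ) h
  exact hx _ (Iio_mem_nhds hxc)

/-- The complement of the convex hull of the support, on which `G_μ` is inverted. -/
def Out (μ : Measure ℝ) : Set ℝ := Iio (aInf μ) ∪ Ioi (bSup μ)

omit [IsProbabilityMeasure μ] in
lemma isOpen_Out : IsOpen (Out μ) := isOpen_Iio.union isOpen_Ioi

/-- The moments `∫ (λ - w)^{-(n+1)} dμ(λ)` of the resolvent; `n! · mom μ n` is the `n`-th
derivative of `G_μ` off the support. -/
noncomputable def mom (μ : Measure ℝ) (n : ℕ) (w : ℝ) : ℝ := ∫ l, ((l - w)⁻¹) ^ (n + 1) ∂μ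

lemma Gst_eq_mom (μ : Measure ℝ) (w : ℝ) : Gst μ w = mom μ 0 w := by
  simp [Gst, mom]

lemma exists_dist (hc : HasCompactSupp μ) {w : ℝ} (hw : w ∈ Out μ) :
    ∃ d > 0, ∀ᵐ l ∂μ, d ≤ |l - w| := by
  rcases hw with hw | hw
  · refine ⟨aInf μ - w, sub_pos.2 hw, ?_⟩
    filter_upwards [ae_mem_Icc hc] with l hl
    exact le_trans (by linarith [hl.1]) (le_abs_self _)
  · refine ⟨w - bSup μ, sub_pos.2 hw, ?_⟩
    filter_upwards [ae_mem_Icc hc] with l hl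
    exact le_trans (by linarith [hl.2]) (neg_le_abs _)

lemma inv_pow_le {d l w : ℝ} (hd : 0 < d) (h : d ≤ |l - w|) (n : ℕ) :
    ‖((l - w)⁻¹) ^ n‖ ≤ (d⁻¹) ^ n := by
  rw [norm_pow, norm_inv, Real.norm_eq_abs]
  gcongr

lemma measurable_inv_pow (w : ℝ) (n : ℕ) : Measurable fun l : ℝ => ((l - w)⁻¹) ^ n := by
  fun_prop

lemma integrable_inv_pow (hc : HasCompactSupp μ) {w : ℝ} (hw : w ∈ Out μ) (n : ℕ) :
    Integrable (fun l => ((l - w)⁻¹) ^ n) μ := by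
  obtain ⟨d, hd, h⟩ := exists_dist hc hw
  refine Integrable.of_bound (measurable_inv_pow w n).aestronglyMeasurable ((d⁻¹) ^ n) ?_
  filter_upwards [h] with l hl using inv_pow_le hd hl n

lemma hasDerivAt_mom (hc : HasCompactSupp μ) {w : ℝ} (hw : w ∈ Out μ) (n : ℕ) :
    HasDerivAt (mom μ n) ((n + 1) * mom μ (n + 1) w) w := by
  obtain ⟨d, hd, h⟩ := exists_dist hc hw
  have hd2 : 0 < d / 2 := by positivity
  have key : ∀ l, d ≤ |l - w| → ∀ x ∈ Metric.ball w (d / 2), d / 2 ≤ |l - x| := by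
    intro l hl x hx
    rw [Metric.mem_ball, Real.dist_eq] at hx
    have := abs_sub_le l x w
    linarith
  have := (hasDerivAt_integral_of_dominated_loc_of_deriv_le (μ := μ) (𝕜 := ℝ)
    (F := fun x l => ((l - x)⁻¹) ^ (n + 1))
    (F' := fun x l => (n + 1) * ((l - x)⁻¹) ^ (n + 2))
    (bound := fun _ => (n + 1) * ((d / 2)⁻¹) ^ (n + 2)) (x₀ := w)
    (Metric.ball_mem_nhds w hd2)
    (Eventually.of_forall fun x => (measurable_inv_pow x (n + 1)).aestronglyMeasurable)
    (integrable_inv_pow hc hw (n + 1))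
    ((measurable_inv_pow w (n + 2)).const_mul _).aestronglyMeasurable ?_
    (integrable_const _) ?_).2
  · rw [integral_const_mul] at this
    exact this
  · filter_upwards [h] with l hl x hx
    rw [norm_mul, Real.norm_of_nonneg (by positivity : (0 : ℝ) ≤ n + 1)]
    gcongr
    exact inv_pow_le hd2 (key l hl x hx) _
  · filter_upwards [h] with l hl x hx
    have h0 : l - x ≠ 0 := abs_pos.1 (hd2.trans_le (key l hl x hx))
    have h1 := (((hasDerivAt_id x).const_sub l).inv h0).pow (n + 1)
    refine h1.congr_deriv ?_
    simp only [id, Nat.add_sub_cancel, Pi.inv_apply]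
    push_cast
    field_simp
    rw [pow_add]
    field_simp

lemma hasDerivAt_Gst (hc : HasCompactSupp μ) {w : ℝ} (hw : w ∈ Out μ) :
    HasDerivAt (Gst μ) (mom μ 1 w) w := by
  have := hasDerivAt_mom hc hw 0
  rw [show Gst μ = mom μ 0 from funext (Gst_eq_mom μ)]
  simpa using this

lemma continuousAt_mom (hc : HasCompactSupp μ) {w : ℝ} (hw : w ∈ Out μ) (n : ℕ) :
    ContinuousAt (mom μ n) w := (hasDerivAt_mom hc hw n).continuousAt

lemma hasStrictDerivAt_Gst (hc : HasCompactSupp μ) {w : ℝ} (hw : w ∈ Out μ) :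
    HasStrictDerivAt (Gst μ) (mom μ 1 w) w :=
  hasStrictDerivAt_of_hasDerivAt_of_continuousAt
    (by filter_upwards [isOpen_Out.mem_nhds hw] with x hx using hasDerivAt_Gst hc hx)
    (continuousAt_mom hc hw 1)

/-- The geometric series `(λ - w - y)⁻¹ = ∑ yⁿ (λ - w)^{-(n+1)}` integrates termwise, so `G_μ` is
real-analytic off the support. -/
lemma analyticAt_Gst (hc : HasCompactSupp μ) {w : ℝ} (hw : w ∈ Out μ) :
    AnalyticAt ℝ (Gst μ) w := by
  obtain ⟨d, hd, h⟩ := exists_dist hc hw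
  refine ⟨FormalMultilinearSeries.ofScalars ℝ (fun n => mom μ n w), hasFPowerSeriesAt_iff.2 ?_⟩
  filter_upwards [Metric.ball_mem_nhds (0 : ℝ) hd] with y hy
  have hy' : |y| < d := by simpa using hy
  have hr : |y| / d < 1 := (div_lt_one hd).2 hy'
  have := hasSum_integral_of_dominated_convergence (μ := μ)
    (F := fun n l => y ^ n * ((l - w)⁻¹) ^ (n + 1)) (f := fun l => (l - (w + y))⁻¹)
    (fun n _ => (|y| / d) ^ n * d⁻¹)
    (fun n => ((measurable_inv_pow w (n + 1)).const_mul _).aestronglyMeasurable) ?_ ?_ ?_ ?_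
  · have h2 : ∀ n : ℕ, ∫ l, y ^ n * ((l - w)⁻¹) ^ (n + 1) ∂μ =
        y ^ n • (FormalMultilinearSeries.ofScalars ℝ (fun n => mom μ n w)).coeff n := by
      intro n
      rw [integral_const_mul]
      simp [FormalMultilinearSeries.coeff_ofScalars, mom]
    simp only [h2] at this
    exact this
  · intro n
    filter_upwards [h] with l hl
    rw [norm_mul, norm_pow, Real.norm_eq_abs]
    calc _ ≤ |y| ^ n * (d⁻¹) ^ (n + 1) := by gcongr; exact inv_pow_le hd hl _
      _ = _ := by rw [div_pow, inv_pow, pow_succ]; field_simp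
  · exact Eventually.of_forall fun l =>
      (summable_geometric_of_lt_one (by positivity) hr).mul_right _
  · exact integrable_const _
  · filter_upwards [h] with l hl
    have h0 : l - w ≠ 0 := abs_pos.1 (hd.trans_le hl)
    have hq : |y * (l - w)⁻¹| < 1 := by
      rw [abs_mul, abs_inv, ← div_eq_mul_inv, div_lt_one (abs_pos.2 h0)]
      exact hy'.trans_le hl
    have h1 := (hasSum_geometric_of_abs_lt_one hq).mul_right ((l - w)⁻¹)
    have h2 : (1 - y * (l - w)⁻¹)⁻¹ * (l - w)⁻¹ = (l - (w + y))⁻¹ := by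
      rw [← mul_inv]
      congr 1
      field_simp
      ring
    rw [h2] at h1
    refine h1.congr_fun fun n => ?_
    rw [mul_pow]; ring

lemma mom_pos_of_lt (hc : HasCompactSupp μ) {w : ℝ} (hw : w < aInf μ) (n : ℕ) :
    0 < mom μ n w := by
  refine (integral_pos_iff_support_of_nonneg_ae ?_ (integrable_inv_pow hc (Or.inl hw) _)).2 ?_
  · filter_upwards [ae_mem_Icc hc] with l hl
    have : 0 < l - w := by linarith [hl.1]
    simp only [Pi.zero_apply]; positivity
  · rw [pos_iff_ne_zero]
    refine fun h0 => (IsProbabilityMeasure.ne_zero μ) ?_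
    rw [← ae_eq_bot, ← empty_mem_iff_bot]
    filter_upwards [ae_mem_Icc hc, (measure_eq_zero_iff_ae_notMem).1 h0] with l hl h1
    have : 0 < l - w := by linarith [hl.1]
    exact h1 (by simp [this.ne'])

lemma mom_one_pos (hc : HasCompactSupp μ) {w : ℝ} (hw : w ∈ Out μ) : 0 < mom μ 1 w := by
  obtain ⟨d, hd, h⟩ := exists_dist hc hw
  refine (integral_pos_iff_support_of_nonneg_ae ?_ (integrable_inv_pow hc hw _)).2 ?_
  · exact Eventually.of_forall fun l => by
      change 0 ≤ ((l - w)⁻¹) ^ 2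
      positivity
  · rw [pos_iff_ne_zero]
    refine fun h0 => (IsProbabilityMeasure.ne_zero μ) ?_
    rw [← ae_eq_bot, ← empty_mem_iff_bot]
    filter_upwards [h, (measure_eq_zero_iff_ae_notMem).1 h0] with l hl h1
    have : l - w ≠ 0 := abs_pos.1 (hd.trans_le hl)
    exact h1 (by simp [this])

lemma mom_le (hc : HasCompactSupp μ) {w : ℝ} (hw : w < aInf μ) (n : ℕ) :
    mom μ n w ≤ ((aInf μ - w)⁻¹) ^ (n + 1) := by
  calc mom μ n w ≤ ∫ l, ((aInf μ - w)⁻¹) ^ (n + 1) ∂μ := by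
        refine integral_mono_ae (integrable_inv_pow hc (Or.inl hw) _) (integrable_const _) ?_
        filter_upwards [ae_mem_Icc hc] with l hl
        have h1 : 0 < aInf μ - w := by linarith
        have h2 : aInf μ - w ≤ l - w := by linarith [hl.1]
        have h3 : 0 < l - w := by linarith
        gcongr
    _ = _ := by simp

lemma Gst_pos (hc : HasCompactSupp μ) {w : ℝ} (hw : w < aInf μ) : 0 < Gst μ w := by
  rw [Gst_eq_mom]; exact mom_pos_of_lt hc hw 0

lemma Gst_neg (hc : HasCompactSupp μ) {w : ℝ} (hw : bSup μ < w) : Gst μ w < 0 := by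
  have h1 := integrable_inv_pow hc (Or.inr hw : w ∈ Out μ) 1
  have : 0 < ∫ l, -(l - w)⁻¹ ∂μ := by
    refine (integral_pos_iff_support_of_nonneg_ae ?_ (by simpa using h1.neg)).2 ?_
    · filter_upwards [ae_mem_Icc hc] with l hl
      have : 0 < w - l := by linarith [hl.2]
      have : 0 < (w - l)⁻¹ := by positivity
      simp only [Pi.zero_apply]
      rw [← neg_sub w l, inv_neg]; linarith
    · rw [pos_iff_ne_zero]
      refine fun h0 => (IsProbabilityMeasure.ne_zero μ) ?_
      rw [← ae_eq_bot, ← empty_mem_iff_bot]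
      filter_upwards [ae_mem_Icc hc, (measure_eq_zero_iff_ae_notMem).1 h0] with l hl h1
      have : l - w ≠ 0 := by linarith [hl.2]
      exact h1 (by simp [this])
  rw [integral_neg] at this
  simpa [Gst] using this

lemma strictMonoOn_Gst_Iio (hc : HasCompactSupp μ) : StrictMonoOn (Gst μ) (Iio (aInf μ)) := by
  refine strictMonoOn_of_deriv_pos (convex_Iio _)
    (fun w hw => (hasDerivAt_Gst hc (Or.inl hw)).continuousAt.continuousWithinAt) ?_
  intro w hw
  rw [interior_Iio] at hw
  rw [(hasDerivAt_Gst hc (Or.inl hw)).deriv]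
  exact mom_one_pos hc (Or.inl hw)

lemma strictMonoOn_Gst_Ioi (hc : HasCompactSupp μ) : StrictMonoOn (Gst μ) (Ioi (bSup μ)) := by
  refine strictMonoOn_of_deriv_pos (convex_Ioi _)
    (fun w hw => (hasDerivAt_Gst hc (Or.inr hw)).continuousAt.continuousWithinAt) ?_
  intro w hw
  rw [interior_Ioi] at hw
  rw [(hasDerivAt_Gst hc (Or.inr hw)).deriv]
  exact mom_one_pos hc (Or.inr hw)

lemma injOn_Gst (hc : HasCompactSupp μ) : InjOn (Gst μ) (Out μ) := by
  rintro x (hx | hx) y (hy | hy) hxy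
  · exact (strictMonoOn_Gst_Iio hc).injOn hx hy hxy
  · linarith [Gst_pos hc hx, Gst_neg hc hy]
  · linarith [Gst_pos hc hy, Gst_neg hc hx]
  · exact (strictMonoOn_Gst_Ioi hc).injOn hx hy hxy

lemma Ginv_Gst (hc : HasCompactSupp μ) {w : ℝ} (hw : w ∈ Out μ) : Ginv μ (Gst μ w) = w :=
  (injOn_Gst hc).leftInvOn_invFunOn hw

/-! ### The inverse Stieltjes transform and the `R`-transform -/

/-- The positive part of the range of `G_μ`: the interval `(0, G_μ(a_μ))`. -/
def Gam (μ : Measure ℝ) : Set ℝ := {g | 0 < g ∧ (g : EReal) < GaSup μ}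

lemma Gst_mem_Gam (hc : HasCompactSupp μ) {w : ℝ} (hw : w < aInf μ) : Gst μ w ∈ Gam μ := by
  refine ⟨Gst_pos hc hw, ?_⟩
  obtain ⟨v, hwv, hv⟩ := exists_between hw
  have h1 : Gst μ w < Gst μ v := strictMonoOn_Gst_Iio hc hw hv hwv
  exact lt_of_lt_of_le (EReal.coe_lt_coe_iff.2 h1) (le_sSup ⟨v, hv, rfl⟩)

lemma exists_of_mem_Gam (hc : HasCompactSupp μ) {g : ℝ} (hg : g ∈ Gam μ) :
    ∃ w < aInf μ, Gst μ w = g := by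
  obtain ⟨hg0, hg1⟩ := hg
  obtain ⟨_, ⟨v, hv, rfl⟩, hgv⟩ := lt_sSup_iff.1 hg1
  have hgv : g < Gst μ v := EReal.coe_lt_coe_iff.1 hgv
  have hv : v < aInf μ := hv
  set u := min v (aInf μ - g⁻¹) with hu
  have hua : u < aInf μ := (min_le_left _ _).trans_lt hv
  have h1 : Gst μ u ≤ g := by
    have := mom_le hc hua 0
    rw [← Gst_eq_mom, zero_add, pow_one] at this
    refine this.trans ?_
    rw [inv_le_comm₀ (by linarith) hg0]
    linarith [min_le_right v (aInf μ - g⁻¹)]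
  have hcont : ContinuousOn (Gst μ) (Icc u v) := fun w hw =>
    (hasDerivAt_Gst hc (Or.inl (hw.2.trans_lt hv))).continuousAt.continuousWithinAt
  obtain ⟨w, hw, hwg⟩ := intermediate_value_Icc (min_le_left _ _) hcont ⟨h1, hgv.le⟩
  exact ⟨w, hw.2.trans_lt hv, hwg⟩

lemma GbInf_lt_zero (hc : HasCompactSupp μ) : GbInf μ < 0 := by
  have h : bSup μ < bSup μ + 1 := by linarith
  refine lt_of_le_of_lt (sInf_le ⟨bSup μ + 1, h, rfl⟩) ?_
  change ((Gst μ (bSup μ + 1) : ℝ) : EReal) < 0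
  exact_mod_cast Gst_neg hc h

lemma exists_of_neg_mem_Dhat (hc : HasCompactSupp μ) {g : ℝ} (hg : -g ∈ Dhat μ) (h0 : g ≠ 0) :
    ∃ w ∈ Out μ, Gst μ w = g := by
  obtain ⟨h1, h2⟩ := hg
  rw [EReal.coe_neg, EReal.neg_lt_neg_iff] at h1 h2
  rcases lt_or_gt_of_ne h0 with hg0 | hg0
  · obtain ⟨_, ⟨v, hv, rfl⟩, hgv⟩ := sInf_lt_iff.1 h2
    have hgv : Gst μ v < g := EReal.coe_lt_coe_iff.1 hgv
    have hv : bSup μ < v := hv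
    set u := max v (bSup μ - g⁻¹) with hu
    have hua : bSup μ < u := hv.trans_le (le_max_left _ _)
    have hcont : ContinuousOn (Gst μ) (Icc v u) := fun w hw =>
      (hasDerivAt_Gst hc (Or.inr (hv.trans_le hw.1))).continuousAt.continuousWithinAt
    have h1 : g ≤ Gst μ u := by
      have hi := integrable_inv_pow hc (Or.inr hua : u ∈ Out μ) 1
      calc g = ∫ _, g ∂μ := by simp
        _ ≤ ∫ l, (l - u)⁻¹ ∂μ := by
          refine integral_mono_ae (integrable_const _) (by simpa using hi) ?_
          filter_upwards [ae_mem_Icc hc] with l hl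
          have h3 : l - u ≤ g⁻¹ := by linarith [hl.2, le_max_right v (bSup μ - g⁻¹)]
          have h5 : l - u < 0 := by linarith [hl.2]
          simpa using (inv_le_inv_of_neg (inv_lt_zero.2 hg0) h5).2 h3
    obtain ⟨w, hw, hwg⟩ := intermediate_value_Icc (le_max_left _ _) hcont ⟨hgv.le, h1⟩
    exact ⟨w, Or.inr (hv.trans_le hw.1), hwg⟩
  · obtain ⟨w, hw, hwg⟩ := exists_of_mem_Gam hc ⟨hg0, h1⟩
    exact ⟨w, Or.inl hw, hwg⟩

lemma neg_mem_Dhat_of_mem_Out (hc : HasCompactSupp μ) {w : ℝ} (hw : w ∈ Out μ) :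
    -(Gst μ w) ∈ Dhat μ := by
  have hneg := GbInf_lt_zero hc
  have hab : (aInf μ - 1) < aInf μ := by linarith
  have hpos : (0 : EReal) < GaSup μ :=
    lt_trans (by exact_mod_cast Gst_pos hc hab) (Gst_mem_Gam hc hab).2
  simp only [Dhat, mem_ofPred_eq, EReal.coe_neg, EReal.neg_lt_neg_iff]
  rcases hw with hw | hw
  · exact ⟨(Gst_mem_Gam hc hw).2, hneg.trans (by exact_mod_cast Gst_pos hc hw)⟩
  · refine ⟨lt_trans (by exact_mod_cast Gst_neg hc hw) hpos, ?_⟩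
    obtain ⟨v, hv, hwv⟩ := exists_between (show bSup μ < w from hw)
    have h1 : Gst μ v < Gst μ w := strictMonoOn_Gst_Ioi hc hv hw hwv
    exact lt_of_le_of_lt (sInf_le ⟨v, hv, rfl⟩) (EReal.coe_lt_coe_iff.2 h1)

lemma Ginv_mem (hc : HasCompactSupp μ) {g : ℝ} (hg : g ∈ Gam μ) :
    Ginv μ g < aInf μ ∧ Gst μ (Ginv μ g) = g := by
  obtain ⟨w, hw, rfl⟩ := exists_of_mem_Gam hc hg
  rw [Ginv_Gst hc (Or.inl hw)]
  exact ⟨hw, rfl⟩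

lemma hasDerivAt_Ginv (hc : HasCompactSupp μ) {w : ℝ} (hw : w ∈ Out μ) :
    HasDerivAt (Ginv μ) (mom μ 1 w)⁻¹ (Gst μ w) := by
  refine ((hasStrictDerivAt_Gst hc hw).to_local_left_inverse (mom_one_pos hc hw).ne'
    ?_).hasDerivAt
  filter_upwards [isOpen_Out.mem_nhds hw] with x hx using Ginv_Gst hc hx

lemma analyticAt_Ginv (hc : HasCompactSupp μ) {g : ℝ} (hg : g ∈ Gam μ) :
    AnalyticAt ℝ (Ginv μ) g := by
  obtain ⟨w, hw, rfl⟩ := exists_of_mem_Gam hc hg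
  have hw : w ∈ Out μ := Or.inl hw
  have hs := hasStrictDerivAt_Gst hc hw
  have hne : deriv (Gst μ) w ≠ 0 := by
    rw [hs.hasDerivAt.deriv]; exact (mom_one_pos hc hw).ne'
  have h1 := (analyticAt_Gst hc hw).analyticAt_localInverse hne
  refine h1.congr ?_
  have hs' : HasStrictDerivAt (Gst μ) (deriv (Gst μ) w) w := by
    rw [hs.hasDerivAt.deriv]; exact hs
  have hsf := hs'.hasStrictFDerivAt_equiv hne
  filter_upwards [hsf.eventually_right_inverse,
    hsf.localInverse_tendsto.eventually (isOpen_Out.mem_nhds hw)] with y hy1 hy2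
  conv_rhs => rw [← hy1]
  exact (Ginv_Gst hc hy2).symm

end Basic

/-! ### Absolutely monotone functions -/

/-- `AM n f S`: on `S` the function `f` is nonnegative, `n` times differentiable, and its first `n`
derivatives are nonnegative. The derivatives are given by witnesses, so that no junk value of
`deriv` enters. -/
def AM : ℕ → (ℝ → ℝ) → Set ℝ → Prop
  | 0, f, S => ∀ x ∈ S, 0 ≤ f x
  | n + 1, f, S => (∀ x ∈ S, 0 ≤ f x) ∧
      ∃ f' : ℝ → ℝ, (∀ x ∈ S, HasDerivAt f (f' x) x) ∧ AM n f' S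

section AMlemmas

variable {S T : Set ℝ}

lemma AM.nonneg {n : ℕ} {f : ℝ → ℝ} (h : AM n f S) : ∀ x ∈ S, 0 ≤ f x := by
  cases n with
  | zero => exact h
  | succ n => exact h.1

lemma AM.of_succ {n : ℕ} {f : ℝ → ℝ} (h : AM (n + 1) f S) : AM n f S := by
  induction n generalizing f with
  | zero => exact h.1
  | succ n ih =>
    obtain ⟨h0, f', hd, h1⟩ := h
    exact ⟨h0, f', hd, ih h1⟩

lemma AM.congr (hS : IsOpen S) {n : ℕ} {f g : ℝ → ℝ} (h : AM n f S) (hfg : EqOn f g S) :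
    AM n g S := by
  cases n with
  | zero => intro x hx; rw [← hfg hx]; exact h x hx
  | succ n =>
    obtain ⟨h0, f', hd, h1⟩ := h
    refine ⟨fun x hx => hfg hx ▸ h0 x hx, f', fun x hx => ?_, h1⟩
    exact (hd x hx).congr_of_eventuallyEq ((hfg.eventuallyEq_of_mem (hS.mem_nhds hx)).symm)

lemma AM.deriv (hS : IsOpen S) {n : ℕ} {f f' : ℝ → ℝ} (h : AM (n + 1) f S)
    (hd : ∀ x ∈ S, HasDerivAt f (f' x) x) : AM n f' S := by
  obtain ⟨-, g, hg, h1⟩ := h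
  exact h1.congr hS fun x hx => (hg x hx).unique (hd x hx)

lemma AM.const {c : ℝ} (hc : 0 ≤ c) (n : ℕ) : AM n (fun _ => c) S := by
  induction n generalizing c with
  | zero => exact fun _ _ => hc
  | succ n ih => exact ⟨fun _ _ => hc, fun _ => 0, fun x _ => hasDerivAt_const x c, ih le_rfl⟩

lemma AM.add {n : ℕ} {f g : ℝ → ℝ} (hf : AM n f S) (hg : AM n g S) :
    AM n (fun x => f x + g x) S := by
  induction n generalizing f g with
  | zero => exact fun x hx => add_nonneg (hf x hx) (hg x hx)
  | succ n ih =>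
    obtain ⟨h0, f', hd, h1⟩ := hf
    obtain ⟨k0, g', kd, k1⟩ := hg
    exact ⟨fun x hx => add_nonneg (h0 x hx) (k0 x hx), fun x => f' x + g' x,
      fun x hx => (hd x hx).add (kd x hx), ih h1 k1⟩

lemma AM.mul {n : ℕ} {f g : ℝ → ℝ} (hf : AM n f S) (hg : AM n g S) :
    AM n (fun x => f x * g x) S := by
  induction n generalizing f g with
  | zero => exact fun x hx => mul_nonneg (hf x hx) (hg x hx)
  | succ n ih =>
    have hf' := hf.of_succ
    have hg' := hg.of_succ
    obtain ⟨h0, f', hd, h1⟩ := hf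
    obtain ⟨k0, g', kd, k1⟩ := hg
    exact ⟨fun x hx => mul_nonneg (h0 x hx) (k0 x hx), fun x => f' x * g x + f x * g' x,
      fun x hx => (hd x hx).mul (kd x hx), (ih h1 hg').add (ih hf' k1)⟩

/-- In the chain rule the inner function only needs one derivative fewer. -/
lemma AM.comp_succ {n : ℕ} {φ ω ω' : ℝ → ℝ} (hφ : AM (n + 1) φ T) (hm : ∀ x ∈ S, ω x ∈ T)
    (hd : ∀ x ∈ S, HasDerivAt ω (ω' x) x) (hω : AM n ω' S) :
    AM (n + 1) (fun x => φ (ω x)) S := by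
  induction n generalizing φ with
  | zero =>
    obtain ⟨h0, φ', hφd, h1⟩ := hφ
    exact ⟨fun x hx => h0 _ (hm x hx), fun x => φ' (ω x) * ω' x,
      fun x hx => (hφd _ (hm x hx)).comp x (hd x hx),
      fun x hx => mul_nonneg (h1 _ (hm x hx)) (hω x hx)⟩
  | succ n ih =>
    obtain ⟨h0, φ', hφd, h1⟩ := hφ
    exact ⟨fun x hx => h0 _ (hm x hx), fun x => φ' (ω x) * ω' x,
      fun x hx => (hφd _ (hm x hx)).comp x (hd x hx), (ih h1 hω.of_succ).mul hω⟩

lemma AM.inv_one_sub {n : ℕ} {q : ℝ → ℝ} (hq : AM n q S) (h1 : ∀ x ∈ S, q x < 1) :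
    AM n (fun x => (1 - q x)⁻¹) S := by
  induction n with
  | zero => exact fun x hx => inv_nonneg.2 (by linarith [h1 x hx])
  | succ n ih =>
    have hq' := ih hq.of_succ
    obtain ⟨h0, q', hd, hq1⟩ := hq
    refine ⟨fun x hx => inv_nonneg.2 (by linarith [h1 x hx]),
      fun x => q' x * ((1 - q x)⁻¹ * (1 - q x)⁻¹), fun x hx => ?_, hq1.mul (hq'.mul hq')⟩
    have hne : 1 - q x ≠ 0 := by linarith [h1 x hx]
    refine (((hd x hx).const_sub 1).inv hne).congr_deriv ?_
    field_simp

lemma AM.of_iteratedDeriv {f : ℝ → ℝ} (hf : AnalyticOnNhd ℝ f S)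
    (h : ∀ k, ∀ x ∈ S, 0 ≤ iteratedDeriv k f x) (n : ℕ) : AM n f S := by
  induction n generalizing f with
  | zero => intro x hx; simpa using h 0 x hx
  | succ n ih =>
    refine ⟨fun x hx => by simpa using h 0 x hx, _root_.deriv f,
      fun x hx => (hf x hx).differentiableAt.hasDerivAt, ih hf.deriv fun k x hx => ?_⟩
    rw [← iteratedDeriv_succ']
    exact h (k + 1) x hx

end AMlemmas

/-! ### Positivity of the derivatives of `-1/G` -/

/-- Kaluza's theorem: the reciprocal of a power series with positive log-convex coefficients `a`
has nonpositive coefficients beyond the constant one. -/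
lemma kaluza {a b : ℕ → ℝ} (ha : ∀ n, 0 < a n) (hlc : ∀ n, a (n + 1) ^ 2 ≤ a n * a (n + 2))
    (hb0 : 0 < b 0)
    (hab : ∀ n, 1 ≤ n → ∑ k ∈ Finset.range (n + 1), b k * a (n - k) = 0) (n : ℕ) (hn : 1 ≤ n) :
    b n ≤ 0 := by
  -- the ratios `a (n + 1) / a n` are nondecreasing
  have hr : ∀ j d, a (j + 1) * a (j + d) ≤ a (j + d + 1) * a j := by
    intro j d
    induction d with
    | zero => simp
    | succ d ih =>
      have h1 := hlc (j + d)
      have h2 := ha (j + d)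
      have h3 := ha (j + d + 1)
      have h4 := ha j
      rw [← add_assoc]
      have h5 : (a (j + 1) * a (j + d + 1)) * a (j + d) ≤ (a (j + d + 1 + 1) * a j) * a (j + d) := by
        calc (a (j + 1) * a (j + d + 1)) * a (j + d)
            = (a (j + 1) * a (j + d)) * a (j + d + 1) := by ring
          _ ≤ (a (j + d + 1) * a j) * a (j + d + 1) := by gcongr
          _ = a (j + d + 1) ^ 2 * a j := by ring
          _ ≤ (a (j + d) * a (j + d + 2)) * a j := by gcongr
          _ = _ := by ring
      exact le_of_mul_le_mul_right h5 h2
  induction n using Nat.strong_induction_on with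
  | _ m ih =>
    obtain ⟨n, rfl⟩ : ∃ n, m = n + 1 := ⟨m - 1, by omega⟩
    have H2 := hab (n + 1) (by omega)
    rw [Finset.sum_range_succ, Nat.sub_self] at H2
    have ha0 := ha 0
    rcases Nat.eq_zero_or_pos n with rfl | hnpos
    · simp only [zero_add, Finset.sum_range_one, Nat.sub_zero] at H2 ⊢
      nlinarith [mul_pos hb0 (ha 1)]
    · have H1 := hab n hnpos
      have H3 : 0 ≤ ∑ k ∈ Finset.range (n + 1),
          (a n * (b k * a (n + 1 - k)) - a (n + 1) * (b k * a (n - k))) := by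
        refine Finset.sum_nonneg fun k hk => ?_
        have hk' : k ≤ n := by simpa [Nat.lt_succ_iff] using hk
        rcases Nat.eq_zero_or_pos k with rfl | hkpos
        · simp only [Nat.sub_zero]; apply le_of_eq; ring
        · have hbk := ih k (by omega) hkpos
          have h1 := hr (n - k) k
          rw [show n - k + 1 = n + 1 - k by omega, show n - k + k = n by omega] at h1
          nlinarith
      rw [Finset.sum_sub_distrib, ← Finset.mul_sum, ← Finset.mul_sum, H1] at H3
      have h2 : 0 ≤ a n * -(b (n + 1) * a 0) := by
        rw [← eq_neg_of_add_eq_zero_left H2]; linarith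
      have h3 : 0 ≤ -(b (n + 1) * a 0) := nonneg_of_mul_nonneg_right h2 (ha n)
      nlinarith

section Recip

variable {μ : Measure ℝ} [IsProbabilityMeasure μ]

lemma integral_trinomial (hc : HasCompactSupp μ) {w : ℝ} (hw : w ∈ Out μ) (α β γ : ℝ)
    (i j k : ℕ) :
    ∫ l, (α * ((l - w)⁻¹) ^ i - β * ((l - w)⁻¹) ^ j + γ * ((l - w)⁻¹) ^ k) ∂μ =
      α * ∫ l, ((l - w)⁻¹) ^ i ∂μ - β * ∫ l, ((l - w)⁻¹) ^ j ∂μ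
        + γ * ∫ l, ((l - w)⁻¹) ^ k ∂μ := by
  have hI := fun k => integrable_inv_pow hc hw k
  have h1 := integral_add (((hI i).const_mul α).sub ((hI j).const_mul β)) ((hI k).const_mul γ)
  have h2 := integral_sub ((hI i).const_mul α) ((hI j).const_mul β)
  simp only [Pi.sub_apply] at h1
  rw [h1, h2, integral_const_mul, integral_const_mul, integral_const_mul]

lemma integral_sq_sub (hc : HasCompactSupp μ) {w : ℝ} (hw : w ∈ Out μ) (c : ℝ) :
    ∫ l, ((l - w)⁻¹ - c) ^ 2 ∂μ = mom μ 1 w - 2 * c * Gst μ w + c ^ 2 := by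
  have h1 := integral_trinomial hc hw 1 (2 * c) (c ^ 2) 2 1 0
  simp only [one_mul, pow_one, pow_zero, mul_one, integral_const, probReal_univ, smul_eq_mul] at h1
  rw [mom, Gst, ← h1]
  congr 1
  ext l
  ring

lemma mom_logConvex (hc : HasCompactSupp μ) {w : ℝ} (hw : w < aInf μ) (n : ℕ) :
    mom μ (n + 1) w ^ 2 ≤ mom μ n w * mom μ (n + 2) w := by
  have hp := mom_pos_of_lt hc hw n
  -- expand `∫ X^{n+1} (mom n · X - mom (n+1))² ≥ 0` with `X = (λ - w)⁻¹`
  have h1 : 0 ≤ ∫ l, (mom μ n w ^ 2 * ((l - w)⁻¹) ^ (n + 3)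
      - (2 * mom μ n w * mom μ (n + 1) w) * ((l - w)⁻¹) ^ (n + 2)
      + mom μ (n + 1) w ^ 2 * ((l - w)⁻¹) ^ (n + 1)) ∂μ := by
    refine integral_nonneg_of_ae ?_
    filter_upwards [ae_mem_Icc hc] with l hl
    have h2 : 0 < l - w := by linarith [hl.1]
    have h3 : 0 ≤ ((l - w)⁻¹) ^ (n + 1) * (mom μ n w * (l - w)⁻¹ - mom μ (n + 1) w) ^ 2 := by
      positivity
    refine h3.trans_eq ?_
    ring
  rw [integral_trinomial hc (Or.inl hw)] at h1
  change 0 ≤ mom μ n w ^ 2 * mom μ (n + 2) w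
    - (2 * mom μ n w * mom μ (n + 1) w) * mom μ (n + 1) w
    + mom μ (n + 1) w ^ 2 * mom μ n w at h1
  nlinarith

lemma Gst_sq_le (hc : HasCompactSupp μ) {w : ℝ} (hw : w ∈ Out μ) :
    Gst μ w ^ 2 ≤ mom μ 1 w := by
  have h1 : 0 ≤ ∫ l, ((l - w)⁻¹ - Gst μ w) ^ 2 ∂μ := integral_nonneg fun l => sq_nonneg _
  rw [integral_sq_sub hc hw] at h1
  nlinarith

lemma iteratedDeriv_Gst (hc : HasCompactSupp μ) {w : ℝ} (hw : w ∈ Out μ) (n : ℕ) :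
    iteratedDeriv n (Gst μ) w = n.factorial * mom μ n w := by
  induction n generalizing w with
  | zero => simp [Gst_eq_mom]
  | succ n ih =>
    rw [iteratedDeriv_succ]
    have h1 : iteratedDeriv n (Gst μ) =ᶠ[nhds w] fun x => n.factorial * mom μ n x := by
      filter_upwards [isOpen_Out.mem_nhds hw] with x hx using ih hx
    rw [h1.deriv_eq, ((hasDerivAt_mom hc hw n).const_mul _).deriv, Nat.factorial_succ]
    push_cast
    ring

lemma iteratedDeriv_inv_Gst_nonpos (hc : HasCompactSupp μ) {w : ℝ} (hw : w < aInf μ)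
    {n : ℕ} (hn : 1 ≤ n) : iteratedDeriv n (fun x => (Gst μ x)⁻¹) w ≤ 0 := by
  have hwO : w ∈ Out μ := Or.inl hw
  have hGp := Gst_pos hc hw
  have hAn := analyticAt_Gst hc hwO
  have key := kaluza (a := fun n => mom μ n w)
    (b := fun n => iteratedDeriv n (fun x => (Gst μ x)⁻¹) w / n.factorial)
    (fun n => mom_pos_of_lt hc hw n) (fun n => mom_logConvex hc hw n) (by simpa using hGp) ?_ n hn
  · have hf : (0 : ℝ) < n.factorial := by exact_mod_cast n.factorial_pos
    simpa using (div_le_iff₀ hf).1 key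
  · intro m hm
    have h1 : (fun x => (Gst μ x)⁻¹) * Gst μ =ᶠ[nhds w] fun _ => (1 : ℝ) := by
      filter_upwards [Iio_mem_nhds hw] with x hx
      simp [(Gst_pos hc hx).ne']
    have h2 := iteratedDeriv_mul (n := m) (x := w) (f := fun x => (Gst μ x)⁻¹) (g := Gst μ)
      (hAn.inv hGp.ne').contDiffAt hAn.contDiffAt
    rw [h1.iteratedDeriv_eq, iteratedDeriv_const, if_neg (by omega)] at h2
    have hmf : (m.factorial : ℝ) ≠ 0 := by exact_mod_cast m.factorial_ne_zero
    apply mul_left_cancel₀ hmf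
    rw [mul_zero, h2, Finset.mul_sum]
    refine Finset.sum_congr rfl fun k hk => ?_
    have hk' : k ≤ m := by simpa [Nat.lt_succ_iff] using hk
    rw [iteratedDeriv_Gst hc hwO, ← Nat.choose_mul_factorial_mul_factorial hk']
    have hkf : (k.factorial : ℝ) ≠ 0 := by exact_mod_cast k.factorial_ne_zero
    push_cast
    field_simp

/-- The derivative of `h(w) = -1/G_μ(w) - w`. -/
noncomputable def hder (μ : Measure ℝ) (w : ℝ) : ℝ := mom μ 1 w / Gst μ w ^ 2 - 1

lemma hasDerivAt_h (hc : HasCompactSupp μ) {w : ℝ} (hw : w < aInf μ) :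
    HasDerivAt (fun x => -(Gst μ x)⁻¹ - x) (hder μ w) w := by
  refine (((hasDerivAt_Gst hc (Or.inl hw)).inv (Gst_pos hc hw).ne').neg.sub
    (hasDerivAt_id w)).congr_deriv ?_
  rw [hder]; ring

/-- A real-variable substitute for the fact that `-1/G_μ(w) - w` is a Nevanlinna function. -/
lemma AM_hder (hc : HasCompactSupp μ) (n : ℕ) : AM n (hder μ) (Iio (aInf μ)) := by
  set f : ℝ → ℝ := fun x => -(Gst μ x)⁻¹ with hf
  have hfan : AnalyticOnNhd ℝ f (Iio (aInf μ)) := fun x hx =>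
    ((analyticAt_Gst hc (Or.inl hx)).inv (Gst_pos hc hx).ne').neg
  have hfd : ∀ x < aInf μ, deriv f x - 1 = hder μ x := by
    intro x hx
    have := (hasDerivAt_h hc hx).add (hasDerivAt_id x)
    have h2 : HasDerivAt f (hder μ x + 1) x := by
      refine this.congr_of_eventuallyEq (Eventually.of_forall fun y => ?_)
      simp [hf]
    rw [h2.deriv]; ring
  have h0 : ∀ x ∈ Iio (aInf μ), 0 ≤ hder μ x := by
    intro x hx
    have h1 := Gst_pos hc hx
    rw [hder, sub_nonneg, le_div_iff₀ (by positivity), one_mul]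
    exact Gst_sq_le hc (Or.inl hx)
  cases n with
  | zero => exact h0
  | succ n =>
    refine AM.congr isOpen_Iio (f := fun x => deriv f x - 1) ?_ hfd
    refine ⟨fun x hx => by simpa only [hfd x hx] using h0 x hx, deriv (deriv f), fun x hx =>
      (hfan.deriv x hx).differentiableAt.hasDerivAt.sub_const 1, ?_⟩
    refine AM.of_iteratedDeriv hfan.deriv.deriv (fun k x hx => ?_) n
    rw [← iteratedDeriv_succ', ← iteratedDeriv_succ', hf]
    have h3 := iteratedDeriv_inv_Gst_nonpos hc hx (n := k + 1 + 1) (by omega)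
    have h4 : iteratedDeriv (k + 1 + 1) (fun x => -(Gst μ x)⁻¹) x =
        -iteratedDeriv (k + 1 + 1) (fun x => (Gst μ x)⁻¹) x := by
      rw [← iteratedDeriv_neg]; rfl
    linarith

lemma AM_mom (hc : HasCompactSupp μ) (n k : ℕ) :
    AM n (fun w => k.factorial * mom μ k w) (Iio (aInf μ)) := by
  induction n generalizing k with
  | zero =>
    intro x hx
    have := mom_pos_of_lt hc hx k
    positivity
  | succ n ih =>
    refine ⟨fun x hx => ?_, fun w => (k + 1).factorial * mom μ (k + 1) w, fun x hx => ?_, ih _⟩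
    · have := mom_pos_of_lt hc hx k
      positivity
    · refine ((hasDerivAt_mom hc (Or.inl hx) k).const_mul _).congr_deriv ?_
      rw [Nat.factorial_succ]; push_cast; ring

end Recip

/-! ### Subordination -/

section Subordination

lemma isOpen_Gam (μ : Measure ℝ) : IsOpen (Gam μ) := by
  have h : Gam μ = Ioi 0 ∩ (fun g : ℝ => (g : EReal)) ⁻¹' Iio (GaSup μ) := by
    ext g; rfl
  rw [h]
  exact isOpen_Ioi.inter (isOpen_Iio.preimage continuous_coe_real_ereal)

lemma Gam_downward {μ : Measure ℝ} {g g' : ℝ} (h : g ∈ Gam μ) (h0 : 0 < g') (hle : g' ≤ g) :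
    g' ∈ Gam μ :=
  ⟨h0, lt_of_le_of_lt (EReal.coe_le_coe_iff.2 hle) h.2⟩

variable {μ ν ρ : Measure ℝ} [IsProbabilityMeasure μ] [IsProbabilityMeasure ν]
  [IsProbabilityMeasure ρ]

/-- The defining identity `R_ρ = R_μ + R_ν`, in terms of the inverse Stieltjes transforms,
propagates from a neighbourhood of `0` by analytic continuation. -/
lemma Ginv_add (hcμ : HasCompactSupp μ) (hcν : HasCompactSupp ν) (hcρ : HasCompactSupp ρ)
    (hρ : IsFreeAdd μ ν ρ) {g : ℝ} (hgμ : g ∈ Gam μ) (hgν : g ∈ Gam ν) (hgρ : g ∈ Gam ρ) :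
    Ginv ρ g = Ginv μ g + Ginv ν g + g⁻¹ := by
  obtain ⟨-, -, ε, hε, hR⟩ := hρ
  set U : Set ℝ := Gam μ ∩ Gam ν ∩ Gam ρ with hU
  have hUord : U.OrdConnected := by
    refine ⟨fun x hx y hy t ht => ?_⟩
    have h0 : 0 < t := hx.2.1.trans_le ht.1
    exact ⟨⟨Gam_downward hy.1.1 h0 ht.2, Gam_downward hy.1.2 h0 ht.2⟩, Gam_downward hy.2 h0 ht.2⟩
  have hid : ∀ t, 0 < t → t < ε → Ginv ρ t = Ginv μ t + Ginv ν t + t⁻¹ := by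
    intro t h0 h1
    have h2 := (hR (-t) ⟨by linarith, by linarith⟩ (by linarith)).2.2.2
    simp only [Rhat, neg_neg, inv_neg] at h2
    linarith
  set t := min g (ε / 2) with ht
  have ht0 : 0 < t := lt_min hgμ.1 (by linarith)
  have htU : t ∈ U := ⟨⟨Gam_downward hgμ ht0 (min_le_left _ _),
    Gam_downward hgν ht0 (min_le_left _ _)⟩, Gam_downward hgρ ht0 (min_le_left _ _)⟩
  have h1 : AnalyticOnNhd ℝ (Ginv ρ) U := fun x hx => analyticAt_Ginv hcρ hx.2
  have h2 : AnalyticOnNhd ℝ (fun x => Ginv μ x + Ginv ν x + x⁻¹) U := fun x hx =>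
    ((analyticAt_Ginv hcμ hx.1.1).add (analyticAt_Ginv hcν hx.1.2)).add
      (analyticAt_id.inv hx.2.1.ne')
  refine h1.eqOn_of_preconnected_of_eventuallyEq h2 hUord.isPreconnected htU ?_ ⟨⟨hgμ, hgν⟩, hgρ⟩
  filter_upwards [Ioo_mem_nhds ht0
    (show t < ε from (min_le_right _ _).trans_lt (by linarith))] with x hx using hid x hx.1 hx.2

/-- The points `x` left of the support of `ρ` at which both subordination functions
`K_μ(G_ρ(x))` and `K_ν(G_ρ(x))` are defined, where `K = G^⟨-1⟩`. -/
def SubDom (μ ν ρ : Measure ℝ) : Set ℝ := {x | x < aInf ρ ∧ Gst ρ x ∈ Gam μ ∧ Gst ρ x ∈ Gam ν}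

lemma isOpen_SubDom (hcρ : HasCompactSupp ρ) (μ ν : Measure ℝ) : IsOpen (SubDom μ ν ρ) := by
  have h : SubDom μ ν ρ = Iio (aInf ρ) ∩ Gst ρ ⁻¹' (Gam μ ∩ Gam ν) := rfl
  rw [h]
  refine ContinuousOn.isOpen_inter_preimage (fun x hx => ?_) isOpen_Iio
    ((isOpen_Gam μ).inter (isOpen_Gam ν))
  exact (hasDerivAt_Gst hcρ (Or.inl hx)).continuousAt.continuousWithinAt

lemma hasDerivAt_omega (hcμ : HasCompactSupp μ) (hcρ : HasCompactSupp ρ) {x : ℝ}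
    (hx : x < aInf ρ) (hg : Gst ρ x ∈ Gam μ) :
    HasDerivAt (fun x => Ginv μ (Gst ρ x))
      ((mom μ 1 (Ginv μ (Gst ρ x)))⁻¹ * mom ρ 1 x) x := by
  obtain ⟨h1, h2⟩ := Ginv_mem hcμ hg
  have h3 := hasDerivAt_Ginv hcμ (Or.inl h1 : Ginv μ (Gst ρ x) ∈ Out μ)
  rw [h2] at h3
  exact h3.comp x (hasDerivAt_Gst hcρ (Or.inl hx))

/-- If `a' = 1 + q b'` and `b' = 1 + p a'` where `p`, `q` are absolutely monotone functions of `a`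
and `b`, then `a'` and `b'` are absolutely monotone: solve the linear system and bootstrap. -/
lemma AM_system {S T₁ T₂ : Set ℝ} {a b a' b' p q : ℝ → ℝ} (hS : IsOpen S)
    (ha : ∀ x ∈ S, a x ∈ T₁) (hb : ∀ x ∈ S, b x ∈ T₂)
    (had : ∀ x ∈ S, HasDerivAt a (a' x) x) (hbd : ∀ x ∈ S, HasDerivAt b (b' x) x)
    (ha0 : ∀ x ∈ S, 0 < a' x) (hb0 : ∀ x ∈ S, 0 < b' x)
    (hp : ∀ n, AM n p T₁) (hq : ∀ n, AM n q T₂)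
    (h1 : ∀ x ∈ S, a' x = 1 + q (b x) * b' x) (h2 : ∀ x ∈ S, b' x = 1 + p (a x) * a' x)
    (n : ℕ) : AM n a' S ∧ AM n b' S := by
  have hlt : ∀ x ∈ S, p (a x) * q (b x) < 1 := by
    intro x hx
    have hq0 := (hq 0).nonneg _ (hb x hx)
    have h3 : a' x * (1 - p (a x) * q (b x)) = 1 + q (b x) := by
      have e1 := h1 x hx
      have e2 := h2 x hx
      rw [e2] at e1
      linear_combination e1
    have h4 : 0 < a' x * (1 - p (a x) * q (b x)) := by rw [h3]; linarith
    linarith [(mul_pos_iff_of_pos_left (ha0 x hx)).1 h4]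
  induction n with
  | zero => exact ⟨fun x hx => (ha0 x hx).le, fun x hx => (hb0 x hx).le⟩
  | succ n ih =>
    have hA := (hp (n + 1)).comp_succ ha had ih.1
    have hB := (hq (n + 1)).comp_succ hb hbd ih.2
    have hJ := (hA.mul hB).inv_one_sub hlt
    have hone : AM (n + 1) (fun _ => (1 : ℝ)) S := AM.const zero_le_one _
    refine ⟨AM.congr hS ((hone.add hB).mul hJ) fun x hx => ?_,
      AM.congr hS ((hone.add hA).mul hJ) fun x hx => ?_⟩
    · have hne : 1 - p (a x) * q (b x) ≠ 0 := by linarith [hlt x hx]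
      have e1 := h1 x hx
      have e2 := h2 x hx
      rw [e2] at e1
      rw [← div_eq_mul_inv, div_eq_iff hne]
      linear_combination -e1
    · have hne : 1 - p (a x) * q (b x) ≠ 0 := by linarith [hlt x hx]
      have e1 := h1 x hx
      have e2 := h2 x hx
      rw [e1] at e2
      rw [← div_eq_mul_inv, div_eq_iff hne]
      linear_combination -e2

/-- Composing with `ω` such that `ω' - 1` is absolutely monotone only increases derivatives:
`(φ ∘ ω)⁽ⁿ⁾ ≥ φ⁽ⁿ⁾ ∘ ω`. Here `φ n`, `ψ n` are the successive derivatives of `φ 0` and of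
`ψ 0 = φ 0 ∘ ω`. -/
lemma comp_deriv_le {S T : Set ℝ} {φ ψ : ℕ → ℝ → ℝ} {ω ω' : ℝ → ℝ} (hS : IsOpen S)
    (hm : ∀ x ∈ S, ω x ∈ T) (hd : ∀ x ∈ S, HasDerivAt ω (ω' x) x)
    (hω : ∀ n, AM n ω' S) (hω1 : ∀ n, AM n (fun x => ω' x - 1) S)
    (hφ : ∀ n, ∀ w ∈ T, HasDerivAt (φ n) (φ (n + 1) w) w) (hφA : ∀ n k, AM n (φ k) T)
    (hψ : ∀ n, ∀ x ∈ S, HasDerivAt (ψ n) (ψ (n + 1) x) x)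
    (h0 : ∀ x ∈ S, ψ 0 x = φ 0 (ω x)) (n : ℕ) : ∀ x ∈ S, φ n (ω x) ≤ ψ n x := by
  have main : ∀ n k, AM k (fun x => ψ n x - φ n (ω x)) S := by
    intro n
    induction n with
    | zero =>
      intro k
      refine AM.congr hS (AM.const le_rfl k) fun x hx => ?_
      simp [h0 x hx]
    | succ n ih =>
      intro k
      have h1 : AM k (fun x => ψ (n + 1) x - φ (n + 1) (ω x) * ω' x) S :=
        (ih (k + 1)).deriv hS fun x hx => (hψ n x hx).sub ((hφ n _ (hm x hx)).comp x (hd x hx))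
      have h2 : AM k (fun x => φ (n + 1) (ω x) * (ω' x - 1)) S :=
        (((hφA (k + 1) (n + 1)).comp_succ hm hd (hω k)).of_succ).mul (hω1 k)
      refine AM.congr hS (h1.add h2) fun x _ => ?_
      ring
  intro x hx
  have := main n 0 x hx
  linarith

/-- The resolvent moments of `μ` at `w` grow at the exact rate `(a_μ - w)⁻ⁿ`, so an upper bound on
them bounds the support from below. -/
lemma le_aInf_of_mom_le {w d : ℝ} (hcμ : HasCompactSupp μ) (hw : w < aInf μ) (hd : 0 < d)
    (h : ∀ n, mom μ n w ≤ (d⁻¹) ^ (n + 1)) : w + d ≤ aInf μ := by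
  by_contra! hlt
  obtain ⟨c, hc1, hc2⟩ := exists_between hlt
  have hcw : 0 < c - w := by linarith
  set p := μ.real (Iio c) with hp
  have hp0 : 0 < p := by
    rw [hp, measureReal_def]
    exact ENNReal.toReal_pos (measure_Iio_ne_zero hc1) (measure_ne_top _ _)
  have h1 : ∀ n : ℕ, p ≤ ((c - w) / d) ^ (n + 1) := by
    intro n
    have hI := integrable_inv_pow hcμ (Or.inl hw : w ∈ Out μ) (n + 1)
    have h2 : p * ((c - w)⁻¹) ^ (n + 1) ≤ mom μ n w := by
      calc p * ((c - w)⁻¹) ^ (n + 1) = ∫ l in Iio c, ((c - w)⁻¹) ^ (n + 1) ∂μ := by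
            rw [setIntegral_const, smul_eq_mul]
        _ ≤ ∫ l in Iio c, ((l - w)⁻¹) ^ (n + 1) ∂μ := by
            refine integral_mono_ae (integrable_const _) hI.integrableOn ?_
            filter_upwards [ae_restrict_of_ae (ae_mem_Icc hcμ),
              ae_restrict_mem measurableSet_Iio] with l hl hlc
            have h3 : 0 < l - w := by linarith [hl.1]
            have h4 : l - w ≤ c - w := by linarith [mem_Iio.1 hlc]
            gcongr
        _ ≤ _ := by
            refine setIntegral_le_integral hI ?_
            filter_upwards [ae_mem_Icc hcμ] with l hl
            have h3 : 0 < l - w := by linarith [hl.1]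
            simp only [Pi.zero_apply]
            positivity
    have h5 := h2.trans (h n)
    rw [inv_pow, inv_pow, ← div_eq_mul_inv, div_le_iff₀ (by positivity)] at h5
    rw [div_pow]
    calc p ≤ _ := h5
      _ = _ := by field_simp
  have h2 : Tendsto (fun n : ℕ => ((c - w) / d) ^ (n + 1)) atTop (nhds 0) :=
    (tendsto_pow_atTop_nhds_zero_of_lt_one (by positivity)
      ((div_lt_one hd).2 (by linarith))).comp (tendsto_add_atTop_nat 1)
  linarith [ge_of_tendsto' h2 h1]

lemma hasDerivAt_factorial_mom (hc : HasCompactSupp μ) (n : ℕ) {w : ℝ} (hw : w < aInf μ) :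
    HasDerivAt (fun w => n.factorial * mom μ n w) ((n + 1).factorial * mom μ (n + 1) w) w := by
  refine ((hasDerivAt_mom hc (Or.inl hw) n).const_mul _).congr_deriv ?_
  rw [Nat.factorial_succ]; push_cast; ring

/-- The subordination function `ω(x) = K_μ(G_ρ(x))` keeps at least the distance `a_ρ - x` from the
edge of the support of `μ`. -/
lemma omega_add_le (hcμ : HasCompactSupp μ) (hcν : HasCompactSupp ν) (hcρ : HasCompactSupp ρ)
    (hK : ∀ g, g ∈ Gam μ → g ∈ Gam ν → g ∈ Gam ρ → Ginv ρ g = Ginv μ g + Ginv ν g + g⁻¹)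
    {x : ℝ} (hx : x ∈ SubDom μ ν ρ) : Ginv μ (Gst ρ x) + (aInf ρ - x) ≤ aInf μ := by
  have hS := isOpen_SubDom hcρ μ ν
  set a : ℝ → ℝ := fun x => Ginv μ (Gst ρ x) with ha
  set b : ℝ → ℝ := fun x => Ginv ν (Gst ρ x) with hb
  set a' : ℝ → ℝ := fun x => (mom μ 1 (a x))⁻¹ * mom ρ 1 x with ha'
  set b' : ℝ → ℝ := fun x => (mom ν 1 (b x))⁻¹ * mom ρ 1 x with hb'
  have ham : ∀ x ∈ SubDom μ ν ρ, a x ∈ Iio (aInf μ) := fun x hx => (Ginv_mem hcμ hx.2.1).1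
  have hbm : ∀ x ∈ SubDom μ ν ρ, b x ∈ Iio (aInf ν) := fun x hx => (Ginv_mem hcν hx.2.2).1
  have haG : ∀ x ∈ SubDom μ ν ρ, Gst μ (a x) = Gst ρ x := fun x hx => (Ginv_mem hcμ hx.2.1).2
  have hbG : ∀ x ∈ SubDom μ ν ρ, Gst ν (b x) = Gst ρ x := fun x hx => (Ginv_mem hcν hx.2.2).2
  have had : ∀ x ∈ SubDom μ ν ρ, HasDerivAt a (a' x) x := fun x hx =>
    hasDerivAt_omega hcμ hcρ hx.1 hx.2.1
  have hbd : ∀ x ∈ SubDom μ ν ρ, HasDerivAt b (b' x) x := fun x hx =>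
    hasDerivAt_omega hcν hcρ hx.1 hx.2.2
  have ha0 : ∀ x ∈ SubDom μ ν ρ, 0 < a' x := fun x hx => mul_pos
    (inv_pos.2 (mom_one_pos hcμ (Or.inl (ham x hx)))) (mom_one_pos hcρ (Or.inl hx.1))
  have hb0 : ∀ x ∈ SubDom μ ν ρ, 0 < b' x := fun x hx => mul_pos
    (inv_pos.2 (mom_one_pos hcν (Or.inl (hbm x hx)))) (mom_one_pos hcρ (Or.inl hx.1))
  have hsum : ∀ x ∈ SubDom μ ν ρ, a x + b x + (Gst ρ x)⁻¹ = x := by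
    intro x hx
    have := hK _ hx.2.1 hx.2.2 (Gst_mem_Gam hcρ hx.1)
    rw [Ginv_Gst hcρ (Or.inl hx.1)] at this
    exact this.symm
  have h1 : ∀ x ∈ SubDom μ ν ρ, a' x = 1 + hder ν (b x) * b' x := by
    intro x hx
    have e1 := (hasDerivAt_id x).add ((hasDerivAt_h hcν (hbm x hx)).comp x (hbd x hx))
    refine (had x hx).unique (e1.congr_of_eventuallyEq ?_)
    filter_upwards [hS.mem_nhds hx] with y hy
    simp only [Pi.add_apply, id, Function.comp, hbG y hy]
    linarith [hsum y hy]
  have h2 : ∀ x ∈ SubDom μ ν ρ, b' x = 1 + hder μ (a x) * a' x := by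
    intro x hx
    have e1 := (hasDerivAt_id x).add ((hasDerivAt_h hcμ (ham x hx)).comp x (had x hx))
    refine (hbd x hx).unique (e1.congr_of_eventuallyEq ?_)
    filter_upwards [hS.mem_nhds hx] with y hy
    simp only [Pi.add_apply, id, Function.comp, haG y hy]
    linarith [hsum y hy]
  have hsys := AM_system hS ham hbm had hbd ha0 hb0 (AM_hder hcμ) (AM_hder hcν) h1 h2
  have ha1 : ∀ n, AM n (fun x => a' x - 1) (SubDom μ ν ρ) := by
    intro n
    have hB := ((AM_hder hcν (n + 1)).comp_succ hbm hbd (hsys n).2).of_succ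
    refine AM.congr hS (hB.mul (hsys n).2) fun x hx => ?_
    rw [h1 x hx]; ring
  have hle := fun n => comp_deriv_le (φ := fun n w => n.factorial * mom μ n w)
    (ψ := fun n w => n.factorial * mom ρ n w) hS ham had (fun n => (hsys n).1) ha1
    (fun n w hw => hasDerivAt_factorial_mom hcμ n hw) (fun n k => AM_mom hcμ n k)
    (fun n w hw => hasDerivAt_factorial_mom hcρ n hw.1)
    (fun y hy => by simp [← Gst_eq_mom, haG y hy]) n x hx
  refine le_aInf_of_mom_le hcμ (ham x hx) (sub_pos.2 hx.1) fun n => ?_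
  have hf : (0 : ℝ) < n.factorial := by exact_mod_cast n.factorial_pos
  exact (le_of_mul_le_mul_left (hle n) hf).trans (mom_le hcρ hx.1 n)

/-- If `G_μ(a_μ) < g*_ρ` were the smallest of the three edge values, the point `z` with
`G_ρ(z) = G_μ(a_μ)` would be sent by `ω` to the edge `a_μ`, although `z` has positive distance to
the support of `ρ`. -/
lemma GaSup_le_aux (hcμ : HasCompactSupp μ) (hcν : HasCompactSupp ν) (hcρ : HasCompactSupp ρ)
    (hK : ∀ g, g ∈ Gam μ → g ∈ Gam ν → g ∈ Gam ρ → Ginv ρ g = Ginv μ g + Ginv ν g + g⁻¹)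
    (hle : GaSup μ ≤ GaSup ν) : GaSup ρ ≤ GaSup μ := by
  by_contra! hlt
  have hab : (aInf μ - 1) < aInf μ := by linarith
  have hp := Gst_mem_Gam hcμ hab
  obtain ⟨g₀, hg₀⟩ : ∃ g₀ : ℝ, GaSup μ = g₀ := by
    refine ⟨(GaSup μ).toReal, (EReal.coe_toReal hlt.ne_top ?_).symm⟩
    exact (lt_of_le_of_lt bot_le hp.2).ne'
  have hg₀pos : 0 < g₀ := by
    have := hp.2
    rw [hg₀, EReal.coe_lt_coe_iff] at this
    exact hp.1.trans this
  obtain ⟨z, hz, hzg⟩ := exists_of_mem_Gam hcρ (g := g₀) ⟨hg₀pos, hg₀ ▸ hlt⟩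
  have hbound : ∀ t < aInf μ, t + (aInf ρ - z) ≤ aInf μ := by
    intro t ht
    have h1 := Gst_mem_Gam hcμ ht
    have h2 : Gst μ t < g₀ := by
      have := h1.2; rwa [hg₀, EReal.coe_lt_coe_iff] at this
    obtain ⟨g, hg1, hg2⟩ := exists_between h2
    have hg0 : 0 < g := h1.1.trans hg1
    have hgμ : g ∈ Gam μ := ⟨hg0, by rw [hg₀]; exact EReal.coe_lt_coe_iff.2 hg2⟩
    obtain ⟨x, hx, rfl⟩ := exists_of_mem_Gam hcρ (g := g) ⟨hg0, hgμ.2.trans hlt⟩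
    have hxz : x < z := by
      rw [← hzg] at hg2
      exact (strictMonoOn_Gst_Iio hcρ).lt_iff_lt hx hz |>.1 hg2
    have h3 := omega_add_le hcμ hcν hcρ hK (x := x) ⟨hx, hgμ, hg0, hgμ.2.trans_le hle⟩
    obtain ⟨h4, h5⟩ := Ginv_mem hcμ hgμ
    rw [← h5] at hg1
    have h6 := (strictMonoOn_Gst_Iio hcμ).lt_iff_lt ht h4 |>.1 hg1
    linarith
  have h7 := hbound (aInf μ - (aInf ρ - z) / 2) (by linarith)
  linarith

lemma GaSup_le (hcμ : HasCompactSupp μ) (hcν : HasCompactSupp ν) (hcρ : HasCompactSupp ρ)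
    (hρ : IsFreeAdd μ ν ρ) : GaSup ρ ≤ GaSup μ ∧ GaSup ρ ≤ GaSup ν := by
  have hK := fun g hμ hν h => Ginv_add (g := g) hcμ hcν hcρ hρ hμ hν h
  rcases le_total (GaSup μ) (GaSup ν) with h | h
  · have := GaSup_le_aux hcμ hcν hcρ hK h
    exact ⟨this, this.trans h⟩
  · have := GaSup_le_aux hcν hcμ hcρ
      (fun g h1 h2 h3 => by rw [hK g h2 h1 h3]; ring) h
    exact ⟨this.trans h, this⟩

end Subordination

/-! ### Derivatives of the `R`-transform and of `E` -/

section Energy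

variable {μ ν ρ : Measure ℝ} [IsProbabilityMeasure μ] [IsProbabilityMeasure ν]
  [IsProbabilityMeasure ρ]

/-- The derivative of `R_μ` at `-G_μ(w)`, as a function of `w`. -/
noncomputable def Rder (μ : Measure ℝ) (w : ℝ) : ℝ := (Gst μ w ^ 2)⁻¹ - (mom μ 1 w)⁻¹

lemma Gst_ne_zero (hc : HasCompactSupp μ) {w : ℝ} (hw : w ∈ Out μ) : Gst μ w ≠ 0 := by
  rcases hw with hw | hw
  · exact (Gst_pos hc hw).ne'
  · exact (Gst_neg hc hw).ne

lemma hasDerivAt_Rhat (hc : HasCompactSupp μ) {w : ℝ} (hw : w ∈ Out μ) :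
    HasDerivAt (Rhat μ) (Rder μ w) (-(Gst μ w)) := by
  have hne := Gst_ne_zero hc hw
  have h1 := hasDerivAt_Ginv hc hw
  rw [← neg_neg (Gst μ w)] at h1
  have h2 := (h1.comp (-(Gst μ w)) (hasDerivAt_neg _)).sub (hasDerivAt_inv (neg_ne_zero.2 hne))
  refine h2.congr_deriv ?_
  rw [Rder, neg_sq]
  ring

lemma Gst_sq_lt (hc : HasCompactSupp μ) (hnd : Nondeg μ) {w : ℝ} (hw : w ∈ Out μ) :
    Gst μ w ^ 2 < mom μ 1 w := by
  refine lt_of_le_of_ne (Gst_sq_le hc hw) fun heq => hnd ⟨w + (Gst μ w)⁻¹, ?_⟩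
  have h1 : ∫ l, ((l - w)⁻¹ - Gst μ w) ^ 2 ∂μ = 0 := by
    rw [integral_sq_sub hc hw, ← heq]; ring
  have hI : Integrable (fun l => ((l - w)⁻¹ - Gst μ w) ^ 2) μ := by
    have h2 := ((integrable_inv_pow hc hw 2).sub
      ((integrable_inv_pow hc hw 1).const_mul (2 * Gst μ w))).add
      (integrable_const (Gst μ w ^ 2))
    refine h2.congr (Eventually.of_forall fun l => ?_)
    simp only [Pi.add_apply, Pi.sub_apply]
    ring
  have h3 := (integral_eq_zero_iff_of_nonneg (fun l => sq_nonneg _) hI).1 h1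
  have h4 : (id : ℝ → ℝ) =ᵐ[μ] fun _ => w + (Gst μ w)⁻¹ := by
    filter_upwards [h3] with l hl
    have h5 : (l - w)⁻¹ = Gst μ w := by
      simpa [sub_eq_zero] using hl
    rw [← h5, inv_inv, id]; ring
  have h6 : Measure.map (id : ℝ → ℝ) μ = Measure.map (fun _ => w + (Gst μ w)⁻¹) μ :=
    Measure.map_congr h4
  rw [Measure.map_id, Measure.map_const] at h6
  simpa using h6

lemma Rder_pos (hc : HasCompactSupp μ) (hnd : Nondeg μ) {w : ℝ} (hw : w ∈ Out μ) :
    0 < Rder μ w := by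
  have h1 := Gst_ne_zero hc hw
  rw [Rder, sub_pos]
  exact inv_strictAnti₀ (by positivity) (Gst_sq_lt hc hnd hw)

lemma Rder_nonneg (hc : HasCompactSupp μ) {w : ℝ} (hw : w ∈ Out μ) : 0 ≤ Rder μ w := by
  have h1 := Gst_ne_zero hc hw
  rw [Rder, sub_nonneg]
  exact inv_anti₀ (by positivity) (Gst_sq_le hc hw)

/-- The variance of `(λ - w)⁻¹` is at most its mean squared distance to `c`. The intended `c` is
`(p - w)⁻¹` with `p` the endpoint of the support farther from `w`. -/
lemma Rder_le_aux (hc : HasCompactSupp μ) {w c : ℝ} (hw : w ∈ Out μ)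
    (h1 : ∀ᵐ l ∂μ, ((l - w)⁻¹ - c) ^ 2 ≤ (bSup μ - aInf μ) ^ 2 * c ^ 2 * ((l - w)⁻¹) ^ 2)
    (h2 : c ^ 2 ≤ Gst μ w ^ 2) : Rder μ w ≤ (bSup μ - aInf μ) ^ 2 := by
  have hI2 := integrable_inv_pow hc hw 2
  have hI : Integrable (fun l => ((l - w)⁻¹ - c) ^ 2) μ := by
    have h2 := (hI2.sub ((integrable_inv_pow hc hw 1).const_mul (2 * c))).add
      (integrable_const (c ^ 2))
    refine h2.congr (Eventually.of_forall fun l => ?_)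
    simp only [Pi.add_apply, Pi.sub_apply]
    ring
  have h3 := integral_mono_ae hI (hI2.const_mul _) h1
  rw [integral_sq_sub hc hw, integral_const_mul] at h3
  change _ ≤ (bSup μ - aInf μ) ^ 2 * c ^ 2 * mom μ 1 w at h3
  have hm := mom_one_pos hc hw
  have hG := Gst_ne_zero hc hw
  have hG2 : 0 < Gst μ w ^ 2 := by positivity
  have h4 : mom μ 1 w - Gst μ w ^ 2 ≤ (bSup μ - aInf μ) ^ 2 * Gst μ w ^ 2 * mom μ 1 w := by
    calc mom μ 1 w - Gst μ w ^ 2 ≤ mom μ 1 w - 2 * c * Gst μ w + c ^ 2 := by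
          nlinarith [sq_nonneg (Gst μ w - c)]
      _ ≤ _ := h3
      _ ≤ _ := by gcongr
  rw [Rder, inv_sub_inv hG2.ne' hm.ne', div_le_iff₀ (by positivity)]
  linarith

lemma Rder_le (hc : HasCompactSupp μ) {w : ℝ} (hw : w ∈ Out μ) :
    Rder μ w ≤ (bSup μ - aInf μ) ^ 2 := by
  have hab := aInf_le_bSup hc
  have hI : Integrable (fun l => (l - w)⁻¹) μ := by simpa using integrable_inv_pow hc hw 1
  rcases id hw with hw' | hw'
  · have hw' : w < aInf μ := hw'
    have hp : 0 < bSup μ - w := by linarith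
    refine Rder_le_aux hc (c := (bSup μ - w)⁻¹) hw ?_ ?_
    · filter_upwards [ae_mem_Icc hc] with l hl
      have h1 : 0 < l - w := by linarith [hl.1]
      have h2 : (l - w)⁻¹ - (bSup μ - w)⁻¹ = (bSup μ - l) * (bSup μ - w)⁻¹ * (l - w)⁻¹ := by
        field_simp; ring
      rw [h2, mul_pow, mul_pow]
      have h3 : 0 ≤ bSup μ - l := by linarith [hl.2]
      have h4 : bSup μ - l ≤ bSup μ - aInf μ := by linarith [hl.1]
      gcongr
    · have h1 : (bSup μ - w)⁻¹ ≤ Gst μ w := by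
        calc (bSup μ - w)⁻¹ = ∫ _, (bSup μ - w)⁻¹ ∂μ := by simp
          _ ≤ _ := by
            refine integral_mono_ae (integrable_const _) hI ?_
            filter_upwards [ae_mem_Icc hc] with l hl
            have h1 : 0 < l - w := by linarith [hl.1]
            have h2 : l - w ≤ bSup μ - w := by linarith [hl.2]
            gcongr
      gcongr
  · have hw' : bSup μ < w := hw'
    have hp : aInf μ - w < 0 := by linarith
    refine Rder_le_aux hc (c := (aInf μ - w)⁻¹) hw ?_ ?_
    · filter_upwards [ae_mem_Icc hc] with l hl
      have h1 : l - w < 0 := by linarith [hl.2]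
      have h2 : (l - w)⁻¹ - (aInf μ - w)⁻¹ = -((l - aInf μ) * (aInf μ - w)⁻¹ * (l - w)⁻¹) := by
        have h5 := hp.ne
        have h6 := h1.ne
        field_simp; ring
      rw [h2, neg_sq, mul_pow, mul_pow]
      have h3 : 0 ≤ l - aInf μ := by linarith [hl.1]
      have h4 : l - aInf μ ≤ bSup μ - aInf μ := by linarith [hl.2]
      gcongr
    · have h1 : Gst μ w ≤ (aInf μ - w)⁻¹ := by
        calc Gst μ w ≤ ∫ _, (aInf μ - w)⁻¹ ∂μ := by
              refine integral_mono_ae hI (integrable_const _) ?_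
              filter_upwards [ae_mem_Icc hc] with l hl
              have h1 : l - w < 0 := by linarith [hl.2]
              have h2 : aInf μ - w ≤ l - w := by linarith [hl.1]
              exact (inv_le_inv_of_neg h1 hp).2 h2
          _ = _ := by simp
      have h2 : (aInf μ - w)⁻¹ < 0 := inv_lt_zero.2 hp
      nlinarith

/-- The set `-D̂_μ ∖ {0}`, i.e. the range of `G_μ` off the convex hull of the support. -/
def GRange (μ : Measure ℝ) : Set ℝ := {g | -g ∈ Dhat μ ∧ g ≠ 0}

omit [IsProbabilityMeasure μ] in
lemma isOpen_Dhat : IsOpen (Dhat μ) := by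
  have h : Dhat μ = (fun g : ℝ => (g : EReal)) ⁻¹' Ioo (-(GaSup μ)) (-(GbInf μ)) := rfl
  rw [h]
  exact isOpen_Ioo.preimage continuous_coe_real_ereal

omit [IsProbabilityMeasure μ] in
lemma isOpen_GRange : IsOpen (GRange μ) :=
  (isOpen_Dhat.preimage continuous_neg).inter isOpen_ne

omit [IsProbabilityMeasure μ] in
lemma ordConnected_Dhat : (Dhat μ).OrdConnected := by
  refine ⟨fun x hx y hy t ht => ⟨lt_of_lt_of_le hx.1 (EReal.coe_le_coe_iff.2 ht.1),
    lt_of_le_of_lt (EReal.coe_le_coe_iff.2 ht.2) hy.2⟩⟩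

lemma zero_mem_Dhat (hc : HasCompactSupp μ) : (0 : ℝ) ∈ Dhat μ := by
  have h1 : aInf μ - 1 < aInf μ := by linarith
  have h2 : bSup μ < bSup μ + 1 := by linarith
  have h3 := neg_mem_Dhat_of_mem_Out hc (Or.inl h1 : aInf μ - 1 ∈ Out μ)
  have h4 := neg_mem_Dhat_of_mem_Out hc (Or.inr h2 : bSup μ + 1 ∈ Out μ)
  exact ordConnected_Dhat.out h3 h4 ⟨by linarith [Gst_pos hc h1], by linarith [Gst_neg hc h2]⟩

lemma Ginv_mem_Out (hc : HasCompactSupp μ) {g : ℝ} (hg : g ∈ GRange μ) :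
    Ginv μ g ∈ Out μ ∧ Gst μ (Ginv μ g) = g := by
  obtain ⟨w, hw, rfl⟩ := exists_of_neg_mem_Dhat hc hg.1 hg.2
  rw [Ginv_Gst hc hw]
  exact ⟨hw, rfl⟩

/-- `g ↦ R_μ'(-g)` in closed form. -/
noncomputable def RderG (μ : Measure ℝ) (g : ℝ) : ℝ := Rder μ (Ginv μ g)

lemma hasDerivAt_Rhat_neg (hc : HasCompactSupp μ) {g : ℝ} (hg : g ∈ GRange μ) :
    HasDerivAt (Rhat μ) (RderG μ g) (-g) := by
  obtain ⟨h1, h2⟩ := Ginv_mem_Out hc hg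
  have := hasDerivAt_Rhat hc h1
  rwa [h2] at this

lemma hasDerivAt_Rhat_comp_neg (hc : HasCompactSupp μ) {g : ℝ} (hg : g ∈ GRange μ) :
    HasDerivAt (fun g => Rhat μ (-g)) (-(RderG μ g)) g := by
  refine ((hasDerivAt_Rhat_neg hc hg).comp g (hasDerivAt_neg g)).congr_deriv ?_
  ring

lemma differentiableAt_RderG (hc : HasCompactSupp μ) {g : ℝ} (hg : g ∈ GRange μ) :
    DifferentiableAt ℝ (RderG μ) g := by
  obtain ⟨h1, h2⟩ := Ginv_mem_Out hc hg
  have h3 : DifferentiableAt ℝ (Rder μ) (Ginv μ g) :=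
    (((hasDerivAt_Gst hc h1).differentiableAt.pow 2).inv (pow_ne_zero 2 (Gst_ne_zero hc h1))).sub
      ((hasDerivAt_mom hc h1 1).differentiableAt.inv (mom_one_pos hc h1).ne')
  have h4 := (hasDerivAt_Ginv hc h1).differentiableAt
  rw [h2] at h4
  exact h3.comp g h4

/-- Since `0 ≤ R_μ' ≤ (b_μ - a_μ)²`, the integral in the definition of `E` converges at `0`, and
the fundamental theorem of calculus applies on both sides of `0`. -/
lemma hasDerivAt_integral (hc : HasCompactSupp μ) {g : ℝ} (hg : g ∈ GRange μ) :
    HasDerivAt (fun g => ∫ s in (0 : ℝ)..g, s * deriv (Rhat μ) (-s)) (g * RderG μ g) g := by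
  have hcont : ContinuousOn (fun s => s * deriv (Rhat μ) (-s)) (GRange μ) := by
    have h1 : ContinuousOn (fun s => s * RderG μ s) (GRange μ) := fun s hs =>
      (continuousAt_id.mul (differentiableAt_RderG hc hs).continuousAt).continuousWithinAt
    refine h1.congr fun s hs => ?_
    simp only [(hasDerivAt_Rhat_neg hc hs).deriv]
  -- for `g < 0` the half-open interval `(g, 0]` contains `0`, which has to be removed
  have hsub : uIoc 0 g \ {0} ⊆ GRange μ := by
    rintro s ⟨hs, hs0⟩
    have hseg : -s ∈ uIcc (-0) (-g) := by
      rcases le_total 0 g with h | h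
      · rw [uIoc_of_le h] at hs
        rw [uIcc_of_ge (by linarith)]
        exact ⟨by linarith [hs.2], by linarith [hs.1]⟩
      · rw [uIoc_of_ge h] at hs
        rw [uIcc_of_le (by linarith)]
        exact ⟨by linarith [hs.2], by linarith [hs.1]⟩
    rw [neg_zero] at hseg
    exact ⟨ordConnected_Dhat.uIcc_subset (zero_mem_Dhat hc) hg.1 hseg, hs0⟩
  have hmeas : MeasurableSet (uIoc 0 g \ {0}) := measurableSet_uIoc.diff (measurableSet_singleton 0)
  have hInt : IntervalIntegrable (fun s => s * deriv (Rhat μ) (-s)) volume 0 g := by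
    rw [intervalIntegrable_iff]
    have h1 : IntegrableOn (fun s => s * deriv (Rhat μ) (-s)) (uIoc 0 g \ {0}) volume := by
      refine IntegrableOn.of_bound ?_
        ((hcont.mono hsub).aestronglyMeasurable hmeas) (|g| * (bSup μ - aInf μ) ^ 2) ?_
      · refine ((measure_mono sdiff_subset).trans_lt ?_)
        simp [uIoc]
      · filter_upwards [ae_restrict_mem hmeas] with s hs
        have h2 := hsub hs
        rw [(hasDerivAt_Rhat_neg hc h2).deriv, norm_mul, Real.norm_eq_abs, Real.norm_eq_abs]
        obtain ⟨h3, -⟩ := Ginv_mem_Out hc h2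
        have h4 : 0 ≤ RderG μ s := Rder_nonneg hc h3
        have h5 : RderG μ s ≤ (bSup μ - aInf μ) ^ 2 := Rder_le hc h3
        have h6 : |s| ≤ |g| := by
          simpa using abs_sub_left_of_mem_uIcc (uIoc_subset_uIcc hs.1)
        rw [abs_of_nonneg h4]
        gcongr
    refine h1.congr_set_ae ?_
    exact (sdiff_null_ae_eq_self (measure_singleton 0)).symm
  have h := intervalIntegral.integral_hasDerivAt_right hInt
    (hcont.stronglyMeasurableAtFilter isOpen_GRange g hg)
    (hcont.continuousAt (isOpen_GRange.mem_nhds hg))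
  rwa [(hasDerivAt_Rhat_neg hc hg).deriv] at h

lemma measurable_log_sub (h : ℝ) : Measurable fun l => Real.log (l - h) :=
  Real.measurable_log.comp (measurable_id.sub_const h)

lemma integrable_log (hc : HasCompactSupp μ) {h : ℝ} (hh : h < aInf μ) :
    Integrable (fun l => Real.log (l - h)) μ := by
  refine Integrable.of_bound (measurable_log_sub h).aestronglyMeasurable
    (|Real.log (aInf μ - h)| + |Real.log (bSup μ - h)|) ?_
  filter_upwards [ae_mem_Icc hc] with l hl
  have h0 : 0 < aInf μ - h := by linarith
  have h1 : Real.log (aInf μ - h) ≤ Real.log (l - h) :=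
    Real.log_le_log h0 (by linarith [hl.1])
  have h2 : Real.log (l - h) ≤ Real.log (bSup μ - h) :=
    Real.log_le_log (by linarith [hl.1]) (by linarith [hl.2])
  rw [Real.norm_eq_abs, abs_le]
  constructor
  · linarith [neg_abs_le (Real.log (aInf μ - h)), abs_nonneg (Real.log (bSup μ - h))]
  · linarith [le_abs_self (Real.log (bSup μ - h)), abs_nonneg (Real.log (aInf μ - h))]

lemma hasDerivAt_logPot (hc : HasCompactSupp μ) {h : ℝ} (hh : h < aInf μ) :
    HasDerivAt (fun h => ∫ l, Real.log (l - h) ∂μ) (-(Gst μ h)) h := by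
  have hd : 0 < (aInf μ - h) / 2 := by linarith
  have key := hasDerivAt_integral_of_dominated_loc_of_deriv_le (μ := μ)
    (F := fun h l => Real.log (l - h)) (F' := fun h l => -(l - h)⁻¹) (x₀ := h)
    (s := Metric.ball h ((aInf μ - h) / 2))
    (bound := fun _ => ((aInf μ - h) / 2)⁻¹)
    (Metric.ball_mem_nhds h hd)
    (Eventually.of_forall fun x => (measurable_log_sub x).aestronglyMeasurable)
    (integrable_log hc hh) (by fun_prop) ?_ (integrable_const _) ?_
  · have h2 := key.2
    rwa [integral_neg] at h2
  · filter_upwards [ae_mem_Icc hc] with l hl x hx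
    rw [Metric.mem_ball, Real.dist_eq, abs_lt] at hx
    have h1 : (aInf μ - h) / 2 ≤ l - x := by linarith [hl.1, hx.2]
    have h2 : 0 < l - x := by linarith
    rw [norm_neg, norm_inv, Real.norm_eq_abs, abs_of_pos h2]
    gcongr
  · filter_upwards [ae_mem_Icc hc] with l hl x hx
    rw [Metric.mem_ball, Real.dist_eq, abs_lt] at hx
    have h2 : 0 < l - x := by linarith [hl.1, hx.2]
    refine (((hasDerivAt_id x).const_sub l).log h2.ne').congr_deriv ?_
    simp [neg_div]

/-- `E'(g) = R_μ'(-g) (g - G_ν(z - R_μ(-g)))`. -/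
lemma hasDerivAt_Efun (hcμ : HasCompactSupp μ) (hcν : HasCompactSupp ν) {z g : ℝ}
    (hg : g ∈ Ehat μ ν z) :
    HasDerivAt (Efun μ ν z) (RderG μ g * (g - Gst ν (z - Rhat μ (-g)))) g := by
  have hgR : g ∈ GRange μ := ⟨hg.1, hg.2.1⟩
  have h1 := (hasDerivAt_Rhat_comp_neg hcμ hgR).const_sub z
  have h2 := (hasDerivAt_logPot hcν hg.2.2).comp g h1
  refine ((hasDerivAt_integral hcμ hgR).add h2).congr_of_eventuallyEq ?_ |>.congr_deriv ?_
  · refine Eventually.of_forall fun x => ?_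
    simp only [Efun, Pi.add_apply, Function.comp_apply]
    congr 1
    refine integral_congr_ae (Eventually.of_forall fun l => ?_)
    simp only
    congr 1
    ring
  · ring

omit [IsProbabilityMeasure ν] in
lemma Ehat_mem_nhds (hcμ : HasCompactSupp μ) {z g : ℝ} (hg : g ∈ Ehat μ ν z) :
    Ehat μ ν z ∈ nhds g := by
  have hgR : g ∈ GRange μ := ⟨hg.1, hg.2.1⟩
  have h1 := ((hasDerivAt_Rhat_comp_neg hcμ hgR).const_sub z).continuousAt
  filter_upwards [isOpen_GRange.mem_nhds hgR, h1.eventually_lt_const hg.2.2] with x hx hx2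
  exact ⟨hx.1, hx.2, hx2⟩

lemma hasDerivAt_deriv_Efun (hcμ : HasCompactSupp μ) (hcν : HasCompactSupp ν) {z g : ℝ}
    (hg : g ∈ Ehat μ ν z) (hcrit : g = Gst ν (z - Rhat μ (-g))) :
    HasDerivAt (deriv (Efun μ ν z))
      (RderG μ g * (1 - mom ν 1 (z - Rhat μ (-g)) * RderG μ g)) g := by
  have hgR : g ∈ GRange μ := ⟨hg.1, hg.2.1⟩
  have h1 := (hasDerivAt_Rhat_comp_neg hcμ hgR).const_sub z
  have h2 := (hasDerivAt_Gst hcν (Or.inl hg.2.2)).comp g h1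
  have h3 := (differentiableAt_RderG hcμ hgR).hasDerivAt.mul ((hasDerivAt_id g).sub h2)
  refine (h3.congr_of_eventuallyEq ?_).congr_deriv ?_
  · filter_upwards [Ehat_mem_nhds hcμ hg] with x hx
    rw [(hasDerivAt_Efun hcμ hcν hx).deriv]
    rfl
  · simp only [Pi.sub_apply, Function.comp_apply, id, ← hcrit]
    ring

/-- Differentiating `K_ρ = K_μ + K_ν + 1/g`. -/
lemma inv_mom_add (hcμ : HasCompactSupp μ) (hcν : HasCompactSupp ν) (hcρ : HasCompactSupp ρ)
    (hρ : IsFreeAdd μ ν ρ) {g : ℝ} (hgμ : g ∈ Gam μ) (hgν : g ∈ Gam ν) (hgρ : g ∈ Gam ρ) :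
    (mom ρ 1 (Ginv ρ g))⁻¹ =
      (mom μ 1 (Ginv μ g))⁻¹ + (mom ν 1 (Ginv ν g))⁻¹ - (g ^ 2)⁻¹ := by
  have hd : ∀ {τ : Measure ℝ} [IsProbabilityMeasure τ], HasCompactSupp τ → g ∈ Gam τ →
      HasDerivAt (Ginv τ) (mom τ 1 (Ginv τ g))⁻¹ g := by
    intro τ _ hc hg
    obtain ⟨h1, h2⟩ := Ginv_mem hc hg
    have := hasDerivAt_Ginv hc (Or.inl h1)
    rwa [h2] at this
  have h1 := ((hd hcμ hgμ).add (hd hcν hgν)).add (hasDerivAt_inv hgμ.1.ne')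
  have h2 : HasDerivAt (Ginv ρ) _ g := h1.congr_of_eventuallyEq (by
    filter_upwards [(isOpen_Gam μ).mem_nhds hgμ, (isOpen_Gam ν).mem_nhds hgν,
      (isOpen_Gam ρ).mem_nhds hgρ] with x h1 h2 h3
    simpa using Ginv_add hcμ hcν hcρ hρ h1 h2 h3)
  rw [(hd hcρ hgρ).unique h2]
  ring

/-- A critical point `g < g*_ρ` solves `K_ρ(g) = z`. -/
lemma eq_Gst_of_crit (hcμ : HasCompactSupp μ) (hcν : HasCompactSupp ν) (hcρ : HasCompactSupp ρ)
    (hnd : Nondeg μ) (hρ : IsFreeAdd μ ν ρ) {z g : ℝ} (hg : g ∈ Ehat μ ν z)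
    (hgρ : (g : EReal) < GaSup ρ) (hcrit : deriv (Efun μ ν z) g = 0) :
    z < aInf ρ ∧ g = Gst ρ z := by
  have hgR : g ∈ GRange μ := ⟨hg.1, hg.2.1⟩
  rw [(hasDerivAt_Efun hcμ hcν hg).deriv] at hcrit
  have h1 : 0 < RderG μ g := Rder_pos hcμ hnd (Ginv_mem_Out hcμ hgR).1
  have h2 : g = Gst ν (z - Rhat μ (-g)) :=
    sub_eq_zero.1 ((mul_eq_zero.1 hcrit).resolve_left h1.ne')
  have h3 : g ∈ Gam ν := by
    rw [h2]; exact Gst_mem_Gam hcν hg.2.2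
  have h4 : g ∈ Gam μ := by
    refine ⟨h3.1, ?_⟩
    have := hg.1.1
    rwa [EReal.coe_neg, EReal.neg_lt_neg_iff] at this
  have h5 : g ∈ Gam ρ := ⟨h3.1, hgρ⟩
  have h6 : Ginv ν g = z - Rhat μ (-g) := by
    conv_lhs => rw [h2]
    exact Ginv_Gst hcν (Or.inl hg.2.2)
  have h7 : Ginv ρ g = z := by
    rw [Ginv_add hcμ hcν hcρ hρ h4 h3 h5, h6, Rhat, neg_neg, inv_neg]
    ring
  obtain ⟨h8, h9⟩ := Ginv_mem hcρ h5
  rw [h7] at h8 h9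
  exact ⟨h8, h9.symm⟩

/-- Since `g*_ρ ≤ min (G_μ(a_μ)) (G_ν(a_ν))`, the point `G_ρ(z)` lies in the domain of `E`, and
`E'' = R_μ' · G_ν' · (1 / G_ν' - R_μ') = R_μ' · G_ν' / G_ρ'` there. -/
lemma crit_Gst (hcμ : HasCompactSupp μ) (hcν : HasCompactSupp ν) (hcρ : HasCompactSupp ρ)
    (hnd : Nondeg μ) (hρ : IsFreeAdd μ ν ρ) {z : ℝ} (hz : z < aInf ρ) :
    Gst ρ z ∈ Ehat μ ν z ∧ deriv (Efun μ ν z) (Gst ρ z) = 0 ∧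
      0 < deriv (deriv (Efun μ ν z)) (Gst ρ z) := by
  obtain ⟨hle1, hle2⟩ := GaSup_le hcμ hcν hcρ hρ
  have hgρ := Gst_mem_Gam hcρ hz
  have hzρ := Ginv_Gst hcρ (Or.inl hz : z ∈ Out ρ)
  set g := Gst ρ z
  have hgμ : g ∈ Gam μ := ⟨hgρ.1, hgρ.2.trans_le hle1⟩
  have hgν : g ∈ Gam ν := ⟨hgρ.1, hgρ.2.trans_le hle2⟩
  obtain ⟨hw1, hw2⟩ := Ginv_mem hcμ hgμ
  obtain ⟨hv1, hv2⟩ := Ginv_mem hcν hgν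
  have hadd := Ginv_add hcμ hcν hcρ hρ hgμ hgν hgρ
  have hh : z - Rhat μ (-g) = Ginv ν g := by
    rw [Rhat, neg_neg, inv_neg]
    linarith
  have hgR : g ∈ GRange μ := by
    refine ⟨?_, hgρ.1.ne'⟩
    have := neg_mem_Dhat_of_mem_Out hcμ (Or.inl hw1)
    rwa [hw2] at this
  have hgE : g ∈ Ehat μ ν z := ⟨hgR.1, hgR.2, by rw [hh]; exact hv1⟩
  have hcrit : g = Gst ν (z - Rhat μ (-g)) := by rw [hh, hv2]
  have hR : 0 < RderG μ g := Rder_pos hcμ hnd (Or.inl hw1)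
  refine ⟨hgE, ?_, ?_⟩
  · rw [(hasDerivAt_Efun hcμ hcν hgE).deriv, ← hcrit, sub_self, mul_zero]
  · rw [(hasDerivAt_deriv_Efun hcμ hcν hgE hcrit).deriv, hh]
    have hm := mom_one_pos hcν (Or.inl hv1)
    have hmρ := mom_one_pos hcρ (Or.inl hz)
    have hsum := inv_mom_add hcμ hcν hcρ hρ hgμ hgν hgρ
    rw [hzρ] at hsum
    have hid : (mom ν 1 (Ginv ν g))⁻¹ - RderG μ g = (mom ρ 1 z)⁻¹ := by
      rw [hsum, RderG, Rder, hw2]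
      ring
    have hpos : 1 - mom ν 1 (Ginv ν g) * RderG μ g = mom ν 1 (Ginv ν g) * (mom ρ 1 z)⁻¹ := by
      rw [← hid, mul_sub, mul_inv_cancel₀ hm.ne']
    rw [hpos]
    positivity

end Energy

/-- `E_{μ,ν,z}` has a critical point in `Ê_{μ,ν,z} ∩ (-∞, g*_ρ)` iff
`z < z*_ρ`, in which case `G_ρ(z)` is the unique critical point there and is a
nondegenerate local minimum. -/
theorem statement6 (μ ν ρ : MeasureTheory.Measure ℝ)
    [MeasureTheory.IsProbabilityMeasure μ] [MeasureTheory.IsProbabilityMeasure ν]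
    (hcμ : HasCompactSupp μ) (hcν : HasCompactSupp ν) (hnd : Nondeg μ)
    (hρ : IsFreeAdd μ ν ρ) (z : ℝ) :
    ((∃ g ∈ Ehat μ ν z, (g : EReal) < GaSup ρ ∧ deriv (Efun μ ν z) g = 0) ↔
      z < aInf ρ) ∧
    (z < aInf ρ →
      (Gst ρ z ∈ Ehat μ ν z ∧ ((Gst ρ z : ℝ) : EReal) < GaSup ρ) ∧
      deriv (Efun μ ν z) (Gst ρ z) = 0 ∧
      0 < deriv (deriv (Efun μ ν z)) (Gst ρ z) ∧
      ∀ g ∈ Ehat μ ν z, (g : EReal) < GaSup ρ → deriv (Efun μ ν z) g = 0 →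
        g = Gst ρ z) := by
  obtain ⟨hprob, hcρ, -⟩ := id hρ
  refine ⟨⟨?_, fun hz => ?_⟩, fun hz => ?_⟩
  · rintro ⟨g, hg, hgρ, hcrit⟩
    exact (eq_Gst_of_crit hcμ hcν hcρ hnd hρ hg hgρ hcrit).1
  · obtain ⟨h1, h2, -⟩ := crit_Gst hcμ hcν hcρ hnd hρ hz
    exact ⟨Gst ρ z, h1, (Gst_mem_Gam hcρ hz).2, h2⟩
  · obtain ⟨h1, h2, h3⟩ := crit_Gst hcμ hcν hcρ hnd hρ hz
    exact ⟨⟨h1, (Gst_mem_Gam hcρ hz).2⟩, h2, h3, fun g hg hgρ hcrit =>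
      (eq_Gst_of_crit hcμ hcν hcρ hnd hρ hg hgρ hcrit).2⟩
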